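/- arXiv:2106.10911 — 4 statements merged into one kernel-verified Lean document; each statement's English description precedes it below -/
import Mathlib

section
/- The flow map of the ODE y' = f(t, y) on ℝᴰ (f smooth) preserves Lebesgue measure for all initial times and time spans if and only if div_y f = Σ_{d=1}^{D} ∂f_d/∂y_d = 0 identically. -/
open MeasureTheory Set

section LiouvilleAux

variable {D : ℕ}

theorem lv_contG (g : ℝ → (Fin D → ℝ) → (Fin D → ℝ)) (hg : ContDiff ℝ 1 (Function.uncurry g)) :
    Continuous (fun p : ℝ × (Fin D → ℝ) => fderiv ℝ (g p.1) p.2) := by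
  have h : ContDiff ℝ 1 (Function.uncurry (fun (p : ℝ × (Fin D → ℝ)) => g p.1)) := by
    have : (Function.uncurry (fun (p : ℝ × (Fin D → ℝ)) => g p.1)) =
        Function.uncurry g ∘ (fun q : (ℝ × (Fin D → ℝ)) × (Fin D → ℝ) => (q.1.1, q.2)) := by
      ext q; rfl
    rw [this]
    exact hg.comp (by fun_prop)
  exact Continuous.fderiv h continuous_snd le_rfl

theorem lv_diff (g : ℝ → (Fin D → ℝ) → (Fin D → ℝ)) (hg : ContDiff ℝ 1 (Function.uncurry g)) (t : ℝ) :
    Differentiable ℝ (g t) := by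
  have : g t = Function.uncurry g ∘ (fun y => (t, y)) := rfl
  rw [this]
  exact (hg.differentiable one_ne_zero).comp (by fun_prop)

theorem lv_uniq (g : ℝ → (Fin D → ℝ) → (Fin D → ℝ)) (hg : ContDiff ℝ 1 (Function.uncurry g))
    (α β : ℝ → (Fin D → ℝ)) (hα : ∀ t, HasDerivAt α (g t (α t)) t)
    (hβ : ∀ t, HasDerivAt β (g t (β t)) t) (h0 : α 0 = β 0) : α = β := by
  funext T
  have hαc : Continuous α := continuous_iff_continuousAt.2 fun t => (hα t).continuousAt
  have hβc : Continuous β := continuous_iff_continuousAt.2 fun t => (hβ t).continuousAt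
  set N : ℝ := |T| + 1 with hN
  have hNpos : 0 < N := by positivity
  have hc : IsCompact (Icc (-N) N) := isCompact_Icc
  obtain ⟨R1, hR1⟩ := (hc.image hαc).isBounded.subset_closedBall 0
  obtain ⟨R2, hR2⟩ := (hc.image hβc).isBounded.subset_closedBall 0
  set R := max R1 R2
  have hc2 : IsCompact (Icc (-N) N ×ˢ Metric.closedBall (0 : (Fin D → ℝ)) R) :=
    hc.prod (isCompact_closedBall _ _)
  obtain ⟨K, hK⟩ := hc2.exists_bound_of_continuousOn (lv_contG g hg).continuousOn
  have hsub : Ioo (-N) N ⊆ Icc (-N) N := Ioo_subset_Icc_self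
  have := ODE_solution_unique_of_mem_Icc (v := g) (K := K.toNNReal) (f := α) (g := β)
    (a := -N) (b := N) (t₀ := 0)
    (s := fun _ => Metric.closedBall (0 : (Fin D → ℝ)) R) ?_ ⟨by linarith, hNpos⟩ hαc.continuousOn
    (fun t _ => hα t) ?_ hβc.continuousOn (fun t _ => hβ t) ?_ h0
  · exact this ⟨by linarith [neg_abs_le T], by linarith [le_abs_self T]⟩
  · intro t ht
    refine Convex.lipschitzOnWith_of_nnnorm_fderiv_le (𝕜 := ℝ) (fun x _ => lv_diff g hg t x) ?_
      (convex_closedBall _ _)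
    intro x hx
    have := hK (t, x) ⟨hsub ht, hx⟩
    exact NNReal.le_toNNReal_of_coe_le this
  · intro t ht
    exact Metric.closedBall_subset_closedBall (le_max_left _ _) (hR1 ⟨t, hsub ht, rfl⟩)
  · intro t ht
    exact Metric.closedBall_subset_closedBall (le_max_right _ _) (hR2 ⟨t, hsub ht, rfl⟩)

theorem lv_linear {F : Type*} [NormedAddCommGroup F] [NormedSpace ℝ F] [FiniteDimensional ℝ F]
    (A : ℝ → F →L[ℝ] F) (hA : Continuous A) (T : ℝ) (hT : 0 ≤ T) (x0 : F) :
    ∃ J : ℝ → F, J 0 = x0 ∧ ∀ t ∈ Icc 0 T, HasDerivWithinAt J (A t (J t)) (Icc 0 T) t := by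
  obtain ⟨K, hK⟩ := (isCompact_Icc (a := (0:ℝ)) (b := T)).exists_bound_of_continuousOn
    hA.continuousOn
  have hK0 : 0 ≤ K := (norm_nonneg _).trans (hK 0 ⟨le_rfl, hT⟩)
  set R : ℝ := ‖x0‖ * Real.exp (K * T) + 1 with hR
  have hRpos : 0 < R := by positivity
  let χ : ContDiffBump (0 : F) := ⟨R, R + 1, hRpos, by linarith⟩
  let P : F → F := fun y => χ y • y
  have hPd : ContDiff ℝ 1 P := (χ.contDiff).smul contDiff_id
  have hPc : HasCompactSupport P := χ.hasCompactSupport.smul_right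
  obtain ⟨L, hL⟩ := hPd.lipschitzWith_of_hasCompactSupport hPc one_ne_zero
  obtain ⟨M, hM⟩ := hPd.continuous.bounded_above_of_compact_support hPc
  have hM0 : 0 ≤ M := (norm_nonneg _).trans (hM 0)
  have hPle : ∀ y, ‖P y‖ ≤ ‖y‖ := by
    intro y
    simp only [P, norm_smul, Real.norm_of_nonneg χ.nonneg]
    exact mul_le_of_le_one_left (norm_nonneg _) χ.le_one
  have hPeq : ∀ y, ‖y‖ ≤ R → P y = y := by
    intro y hy
    have : χ y = 1 := χ.one_of_mem_closedBall (by simpa [χ] using hy)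
    simp [P, this]
  have hpl : IsPicardLindelof (fun t y => A t (P y)) (tmin := 0) (tmax := T) ⟨0, le_rfl, hT⟩ x0
      (K * M * T).toNNReal 0 (K * M).toNNReal (K.toNNReal * L) := by
    constructor
    · intro t ht
      refine (LipschitzWith.comp ?_ hL).lipschitzOnWith
      refine (A t).lipschitz.weaken ?_
      exact NNReal.le_toNNReal_of_coe_le (hK t ht)
    · intro x _
      exact (hA.clm_apply continuous_const).continuousOn
    · intro t ht x _
      rw [Real.coe_toNNReal _ (by positivity)]
      exact ((A t).le_opNorm _).trans (mul_le_mul (hK t ht) (hM x) (norm_nonneg _) hK0)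
    · rw [Real.coe_toNNReal _ (by positivity), Real.coe_toNNReal _ (by positivity)]
      simp [hT]
  obtain ⟨J, hJ0, hJ⟩ := hpl.exists_eq_forall_mem_Icc_hasDerivWithinAt₀
  have hJ0' : J 0 = x0 := hJ0
  refine ⟨J, hJ0', ?_⟩
  have hb : ∀ t ∈ Icc 0 T, ‖J t‖ ≤ R := by
    intro t ht
    have := norm_le_gronwallBound_of_norm_deriv_right_le (f := J)
      (f' := fun t => A t (P (J t))) (δ := ‖x0‖) (K := K) (ε := 0) (a := 0) (b := T)
      (fun t ht => (hJ t ht).continuousWithinAt)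
      (fun t ht => (hJ t (Ico_subset_Icc_self ht)).mono_of_mem_nhdsWithin
        (Icc_mem_nhdsGE_of_mem ht)) (by rw [hJ0']) ?_ t ht
    · rw [gronwallBound_ε0, sub_zero] at this
      refine this.trans ?_
      have : Real.exp (K * t) ≤ Real.exp (K * T) := Real.exp_le_exp.2 (by gcongr; exact ht.2)
      have := mul_le_mul_of_nonneg_left this (norm_nonneg x0)
      linarith
    · intro t ht
      rw [add_zero]
      exact ((A t).le_opNorm _).trans (mul_le_mul (hK t (Ico_subset_Icc_self ht)) (hPle _)
        (norm_nonneg _) hK0)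
  intro t ht
  have := hJ t ht
  rwa [hPeq _ (hb t ht)] at this

/-- uniform continuity of the spatial derivative along an orbit -/
theorem lv_unif (g : ℝ → (Fin D → ℝ) → (Fin D → ℝ)) (hg : ContDiff ℝ 1 (Function.uncurry g))
    (y : ℝ → (Fin D → ℝ)) (hy : Continuous y) (T ε : ℝ) (hε : 0 < ε) :
    ∃ δ > 0, ∀ t ∈ Icc 0 T, ∀ z, ‖z - y t‖ ≤ δ →
      ‖g t z - g t (y t) - fderiv ℝ (g t) (y t) (z - y t)‖ ≤ ε * ‖z - y t‖ := by
  have hc : IsCompact ((fun t => (t, y t)) '' Icc 0 T) :=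
    isCompact_Icc.image (by fun_prop)
  have := hc.uniformContinuousAt_of_continuousAt _
    (fun a _ => (lv_contG g hg).continuousAt) (Metric.dist_mem_uniformity hε)
  obtain ⟨δ, hδ, h⟩ := Metric.mem_uniformity_dist.1 this
  refine ⟨δ / 2, by positivity, ?_⟩
  intro t ht z hz
  have key := Convex.norm_image_sub_le_of_norm_hasFDerivWithin_le' (𝕜 := ℝ) (f := g t) (C := ε)
    (s := Metric.closedBall (y t) (δ / 2)) (x := y t) (y := z)
    (f' := fun w => fderiv ℝ (g t) w) (φ := fderiv ℝ (g t) (y t))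
    (fun w _ => (lv_diff g hg t w).hasFDerivAt.hasFDerivWithinAt) ?_ (convex_closedBall _ _)
    (Metric.mem_closedBall_self (by positivity)) (by simpa [dist_eq_norm] using hz)
  · exact key
  · intro w hw
    have hd : dist ((t, y t) : ℝ × (Fin D → ℝ)) (t, w) < δ := by
      rw [Prod.dist_eq, dist_self, max_lt_iff]
      refine ⟨hδ, ?_⟩
      rw [dist_comm]
      have : dist w (y t) ≤ δ / 2 := hw
      linarith
    have := h hd ⟨t, ht, rfl⟩
    rw [← dist_eq_norm, dist_comm]
    exact le_of_lt this

theorem lv_tube (g : ℝ → (Fin D → ℝ) → (Fin D → ℝ)) (hg : ContDiff ℝ 1 (Function.uncurry g))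
    (Φ : ℝ → (Fin D → ℝ) → (Fin D → ℝ)) (h0 : ∀ x, Φ 0 x = x)
    (hΦ : ∀ x t, HasDerivAt (fun u => Φ u x) (g t (Φ t x)) t) (T : ℝ) (hT : 0 ≤ T)
    (x0 : (Fin D → ℝ)) :
    ∃ δ > 0, ∃ C > 0, ∀ x, ‖x - x0‖ ≤ δ → ∀ t ∈ Icc 0 T, ‖Φ t x - Φ t x0‖ ≤ C * ‖x - x0‖ := by
  have hc : ∀ x, Continuous (fun u => Φ u x) := fun x =>
    continuous_iff_continuousAt.2 fun t => (hΦ x t).continuousAt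
  obtain ⟨δ, hδ, h⟩ := lv_unif g hg _ (hc x0) T 1 one_pos
  obtain ⟨M, hM⟩ := (isCompact_Icc (a := (0:ℝ)) (b := T)).exists_bound_of_continuousOn
    ((lv_contG g hg).comp (continuous_id.prodMk (hc x0))).continuousOn
  have hM0 : 0 ≤ M := (norm_nonneg _).trans (hM 0 ⟨le_rfl, hT⟩)
  set C := Real.exp ((M + 2) * T) with hC
  have hCpos : 0 < C := Real.exp_pos _
  refine ⟨δ / C, by positivity, C, hCpos, ?_⟩
  intro x hx
  rcases eq_or_ne x x0 with rfl | hne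
  · intro t _; simp
  have hpos : 0 < ‖x - x0‖ := norm_pos_iff.2 (sub_ne_zero.2 hne)
  have hBle : ∀ t ∈ Icc 0 T, ‖x - x0‖ * Real.exp ((M + 2) * t) ≤ C * ‖x - x0‖ := by
    intro t ht
    rw [mul_comm]
    refine mul_le_mul_of_nonneg_right ?_ hpos.le
    exact Real.exp_le_exp.2 (mul_le_mul_of_nonneg_left ht.2 (by positivity))
  have hxC : C * ‖x - x0‖ ≤ δ := by
    rw [le_div_iff₀ hCpos] at hx; linarith
  intro t ht
  refine le_trans ?_ (hBle t ht)
  refine image_norm_le_of_norm_deriv_right_lt_deriv_boundary (f := fun t => Φ t x - Φ t x0)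
    (a := 0) (b := T) (f' := fun t => g t (Φ t x) - g t (Φ t x0))
    (B := fun t => ‖x - x0‖ * Real.exp ((M + 2) * t))
    (B' := fun t => ‖x - x0‖ * (Real.exp ((M + 2) * t) * ((M + 2) * 1)))
    ((hc x).sub (hc x0)).continuousOn
    (fun t _ => ((hΦ x t).sub (hΦ x0 t)).hasDerivWithinAt) (by simp [h0])
    (fun t => (((hasDerivAt_id t).const_mul (M + 2)).exp).const_mul _) ?_ ht
  intro s hs heq
  have hs' := Ico_subset_Icc_self hs
  have h1 : ‖Φ s x - Φ s x0‖ ≤ δ := by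
    rw [heq]; exact (hBle s hs').trans hxC
  have h2 := h s hs' _ h1
  have h3 : ‖fderiv ℝ (g s) (Φ s x0) (Φ s x - Φ s x0)‖ ≤ M * ‖Φ s x - Φ s x0‖ :=
    (ContinuousLinearMap.le_opNorm _ _).trans
      (mul_le_mul_of_nonneg_right (hM s hs') (norm_nonneg _))
  have h4 : ‖g s (Φ s x) - g s (Φ s x0)‖ ≤ (M + 1) * ‖Φ s x - Φ s x0‖ := by
    have := norm_add_le (g s (Φ s x) - g s (Φ s x0) - fderiv ℝ (g s) (Φ s x0) (Φ s x - Φ s x0))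
      (fderiv ℝ (g s) (Φ s x0) (Φ s x - Φ s x0))
    rw [sub_add_cancel] at this
    linarith
  refine h4.trans_lt ?_
  rw [heq]
  have : 0 < ‖x - x0‖ * Real.exp ((M + 2) * s) := by positivity
  nlinarith

theorem lv_hasFDerivAt (g : ℝ → (Fin D → ℝ) → (Fin D → ℝ))
    (hg : ContDiff ℝ 1 (Function.uncurry g))
    (Φ : ℝ → (Fin D → ℝ) → (Fin D → ℝ)) (h0 : ∀ x, Φ 0 x = x)
    (hΦ : ∀ x t, HasDerivAt (fun u => Φ u x) (g t (Φ t x)) t) (T : ℝ) (hT : 0 ≤ T)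
    (x0 : (Fin D → ℝ)) (J : ℝ → (Fin D → ℝ) →L[ℝ] (Fin D → ℝ))
    (hJ0 : J 0 = ContinuousLinearMap.id ℝ _)
    (hJ : ∀ t ∈ Icc 0 T, HasDerivWithinAt J ((fderiv ℝ (g t) (Φ t x0)).comp (J t)) (Icc 0 T) t) :
    HasFDerivAt (Φ T) (J T) x0 := by
  have hc : ∀ x, Continuous (fun u => Φ u x) := fun x =>
    continuous_iff_continuousAt.2 fun t => (hΦ x t).continuousAt
  obtain ⟨δ0, hδ0, C, hC, htube⟩ := lv_tube g hg Φ h0 hΦ T hT x0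
  obtain ⟨M, hM⟩ := (isCompact_Icc (a := (0:ℝ)) (b := T)).exists_bound_of_continuousOn
    ((lv_contG g hg).comp (continuous_id.prodMk (hc x0))).continuousOn
  have hM0 : 0 ≤ M := (norm_nonneg _).trans (hM 0 ⟨le_rfl, hT⟩)
  set K := M + 1 with hK
  have hKpos : 0 < K := by positivity
  refine HasFDerivAt.of_isLittleO (Asymptotics.isLittleO_iff.2 ?_)
  intro c hcpos
  set ε := c * K / (C * Real.exp (K * T)) with hε
  have hεpos : 0 < ε := by positivity
  obtain ⟨δ, hδ, h⟩ := lv_unif g hg _ (hc x0) T ε hεpos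
  have hmem : Metric.closedBall x0 (min δ0 (δ / C)) ∈ nhds x0 :=
    Metric.closedBall_mem_nhds _ (by positivity)
  filter_upwards [hmem] with x hx
  rw [Metric.mem_closedBall, dist_eq_norm] at hx
  have ht := htube x (hx.trans (min_le_left _ _))
  have hxδ : C * ‖x - x0‖ ≤ δ := by
    have := hx.trans (min_le_right _ _)
    rw [le_div_iff₀ hC] at this; linarith
  have key := norm_le_gronwallBound_of_norm_deriv_right_le
    (f := fun t => Φ t x - Φ t x0 - J t (x - x0))
    (f' := fun t => g t (Φ t x) - g t (Φ t x0) -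
      (fderiv ℝ (g t) (Φ t x0)).comp (J t) (x - x0)) (δ := 0) (K := K)
    (ε := ε * (C * ‖x - x0‖)) (a := 0) (b := T) ?_ ?_ ?_ ?_ T ⟨hT, le_rfl⟩
  · refine key.trans ?_
    rw [gronwallBound_of_K_ne_0 hKpos.ne']
    simp only [zero_mul, zero_add, sub_zero]
    have h5 : ε * (C * ‖x - x0‖) / K * (Real.exp (K * T) - 1) ≤
        ε * (C * ‖x - x0‖) / K * (Real.exp (K * T)) :=
      mul_le_mul_of_nonneg_left (by linarith) (by positivity)
    refine h5.trans (le_of_eq ?_)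
    rw [hε]
    have := Real.exp_pos (K * T)
    field_simp
  · refine ((hc x).sub (hc x0)).continuousOn.sub ?_
    intro t ht
    exact (hJ t ht).continuousWithinAt.clm_apply continuousWithinAt_const
  · intro t ht
    refine ((hΦ x t).sub (hΦ x0 t)).hasDerivWithinAt.sub ?_
    have h1 := (hJ t (Ico_subset_Icc_self ht)).mono_of_mem_nhdsWithin (Icc_mem_nhdsGE_of_mem ht)
    have h2 := h1.clm_apply (hasDerivWithinAt_const t (Ici t) (x - x0))
    simpa using h2
  · simp [h0, hJ0]
  · intro t ht'
    have ht'' := Ico_subset_Icc_self ht'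
    have h1 := h t ht'' (Φ t x) ((ht t ht'').trans hxδ)
    have h2 : ‖fderiv ℝ (g t) (Φ t x0) (Φ t x - Φ t x0 - J t (x - x0))‖ ≤
        M * ‖Φ t x - Φ t x0 - J t (x - x0)‖ :=
      (ContinuousLinearMap.le_opNorm _ _).trans
        (mul_le_mul_of_nonneg_right (hM t ht'') (norm_nonneg _))
    have h3 : g t (Φ t x) - g t (Φ t x0) - (fderiv ℝ (g t) (Φ t x0)).comp (J t) (x - x0) =
        fderiv ℝ (g t) (Φ t x0) (Φ t x - Φ t x0 - J t (x - x0)) +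
        (g t (Φ t x) - g t (Φ t x0) - fderiv ℝ (g t) (Φ t x0) (Φ t x - Φ t x0)) := by
      rw [map_sub _ (Φ t x - Φ t x0)]
      simp only [ContinuousLinearMap.comp_apply]
      abel
    rw [h3]
    refine (norm_add_le _ _).trans ?_
    have h4 : ε * ‖Φ t x - Φ t x0‖ ≤ ε * (C * ‖x - x0‖) :=
      mul_le_mul_of_nonneg_left (ht t ht'') hεpos.le
    have h5 : M * ‖Φ t x - Φ t x0 - J t (x - x0)‖ ≤ K * ‖Φ t x - Φ t x0 - J t (x - x0)‖ :=
      mul_le_mul_of_nonneg_right (by linarith) (norm_nonneg _)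
    linarith

theorem lv_det_eq (L : (Fin D → ℝ) →L[ℝ] (Fin D → ℝ)) :
    L.det = ∑ σ : Equiv.Perm (Fin D), ((Equiv.Perm.sign σ : ℤ) : ℝ) *
      ∏ i, L (Pi.single i 1) (σ i) := by
  rw [ContinuousLinearMap.det, ← LinearMap.det_toMatrix', Matrix.det_apply']
  rfl

theorem lv_det_diff : Differentiable ℝ
    (fun L : (Fin D → ℝ) →L[ℝ] (Fin D → ℝ) => L.det) := by
  simp_rw [lv_det_eq]
  have h : ∀ i j : Fin D, ContDiff ℝ 1
      (fun L : (Fin D → ℝ) →L[ℝ] (Fin D → ℝ) => L (Pi.single i 1) j) := by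
    intro i j
    exact (contDiff_pi.1 ((ContinuousLinearMap.apply ℝ (Fin D → ℝ)
      (Pi.single i (1:ℝ) : Fin D → ℝ)).contDiff)) j
  refine Differentiable.fun_sum fun σ _ => ?_
  refine Differentiable.const_mul ?_ _
  exact (contDiff_prod (fun i _ => h i (σ i))).differentiable one_ne_zero

theorem lv_det_fderiv (J A : (Fin D → ℝ) →L[ℝ] (Fin D → ℝ)) :
    fderiv ℝ (fun L : (Fin D → ℝ) →L[ℝ] (Fin D → ℝ) => L.det) J (A.comp J) =
      (∑ d, A (Pi.single d 1) d) * J.det := by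
  have h1 : HasDerivAt (fun s : ℝ => J + s • A.comp J) (A.comp J) 0 := by
    simpa using ((hasDerivAt_id (0:ℝ)).smul_const (A.comp J)).const_add J
  have h2 : HasDerivAt (fun s : ℝ => (J + s • A.comp J).det)
      (fderiv ℝ (fun L : (Fin D → ℝ) →L[ℝ] (Fin D → ℝ) => L.det) J (A.comp J)) 0 := by
    have := (lv_det_diff (D := D) (J + (0:ℝ) • A.comp J)).hasFDerivAt.comp_hasDerivAt (0:ℝ) h1
    simp only [zero_smul, add_zero] at this
    exact this
  set M := LinearMap.toMatrix' (A : (Fin D → ℝ) →ₗ[ℝ] (Fin D → ℝ)) with hM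
  have h3 : ∀ s : ℝ, (J + s • A.comp J).det = (1 + s • M).det * J.det := by
    intro s
    have e : (J + s • A.comp J : (Fin D → ℝ) →L[ℝ] (Fin D → ℝ)) =
      (ContinuousLinearMap.id ℝ _ + s • A).comp J := by ext; simp
    rw [e]
    simp only [ContinuousLinearMap.det, ContinuousLinearMap.toLinearMap_comp]
    rw [LinearMap.det_comp, ← LinearMap.det_toMatrix' (ContinuousLinearMap.toLinearMap _)]
    congr 2
    rw [hM]
    simp [LinearMap.toMatrix'_id]
  have h4 : HasDerivAt (fun s : ℝ => (J + s • A.comp J).det) (M.trace * J.det) 0 := by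
    obtain ⟨q, hq⟩ : ∃ q : Polynomial ℝ, ∀ s : ℝ,
        (1 + s • M).det = 1 + M.trace * s + q.eval s * s ^ 2 :=
      ⟨_, fun s => Matrix.det_one_add_smul s M⟩
    have h5 : (fun s : ℝ => (J + s • A.comp J).det) = fun s : ℝ => (1 + M.trace * s +
        q.eval s * s ^ 2) * J.det := by
      funext s
      rw [h3, hq]
    rw [h5]
    refine HasDerivAt.mul_const ?_ _
    have := (((hasDerivAt_id (0:ℝ)).const_mul M.trace).const_add 1).add
      ((q.hasDerivAt (0:ℝ)).mul ((hasDerivAt_id (0:ℝ)).pow 2))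
    convert! this using 1
    simp
  rw [h2.unique h4]
  rfl

theorem lv_main (g : ℝ → (Fin D → ℝ) → (Fin D → ℝ))
    (hg : ContDiff ℝ 1 (Function.uncurry g))
    (Φ : ℝ → (Fin D → ℝ) → (Fin D → ℝ)) (h0 : ∀ x, Φ 0 x = x)
    (hΦ : ∀ x t, HasDerivAt (fun u => Φ u x) (g t (Φ t x)) t) (T : ℝ) (hT : 0 ≤ T)
    (x0 : (Fin D → ℝ)) :
    ∃ J : (Fin D → ℝ) →L[ℝ] (Fin D → ℝ), HasFDerivAt (Φ T) J x0 ∧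
      J.det = Real.exp (∫ s in (0:ℝ)..T, ∑ d, fderiv ℝ (g s) (Φ s x0) (Pi.single d 1) d) := by
  have hc : Continuous (fun u => Φ u x0) :=
    continuous_iff_continuousAt.2 fun t => (hΦ x0 t).continuousAt
  set A : ℝ → (Fin D → ℝ) →L[ℝ] (Fin D → ℝ) := fun t => fderiv ℝ (g t) (Φ t x0) with hAdef
  have hA : Continuous A := (lv_contG g hg).comp (continuous_id.prodMk hc)
  obtain ⟨J, hJ0, hJ⟩ := lv_linear
    (fun t => ContinuousLinearMap.compL ℝ (Fin D → ℝ) (Fin D → ℝ) (Fin D → ℝ) (A t))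
    (by fun_prop) T hT (ContinuousLinearMap.id ℝ _)
  simp only [ContinuousLinearMap.compL_apply] at hJ
  refine ⟨J T, lv_hasFDerivAt g hg Φ h0 hΦ T hT x0 J hJ0 hJ, ?_⟩
  set a : ℝ → ℝ := fun s => ∑ d, A s (Pi.single d 1) d with ha
  have hac : Continuous a := by
    refine continuous_finsetSum _ fun d _ => ?_
    exact (continuous_apply d).comp (hA.clm_apply continuous_const)
  have hI : ∀ t, HasDerivAt (fun t => ∫ s in (0:ℝ)..t, a s) (a t) t := fun t =>
    intervalIntegral.integral_hasDerivAt_right (hac.intervalIntegrable _ _)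
      (hac.stronglyMeasurableAtFilter _ _) hac.continuousAt
  have hIc : Continuous (fun t => ∫ s in (0:ℝ)..t, a s) :=
    continuous_iff_continuousAt.2 fun t => (hI t).continuousAt
  have key := constant_of_has_deriv_right_zero
    (f := fun t => (J t).det * Real.exp (-∫ s in (0:ℝ)..t, a s)) (a := 0) (b := T) ?_ ?_ T
    ⟨hT, le_rfl⟩
  · simp only [hJ0, intervalIntegral.integral_same, neg_zero, Real.exp_zero, mul_one] at key
    have h1 : (ContinuousLinearMap.id ℝ (Fin D → ℝ)).det = 1 := by
      simp [ContinuousLinearMap.det]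
    rw [h1, Real.exp_neg, mul_inv_eq_one₀ (Real.exp_ne_zero _)] at key
    exact key
  · refine ContinuousOn.mul ?_ (by fun_prop)
    intro t ht
    exact lv_det_diff.continuous.continuousAt.comp_continuousWithinAt (hJ t ht).continuousWithinAt
  · intro t ht
    have h1 := (hJ t (Ico_subset_Icc_self ht)).mono_of_mem_nhdsWithin (Icc_mem_nhdsGE_of_mem ht)
    have h2 := (lv_det_diff (J t)).hasFDerivAt.comp_hasDerivWithinAt t h1
    rw [lv_det_fderiv] at h2
    have h3 := h2.mul ((hI t).neg.exp).hasDerivWithinAt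
    convert! h3 using 1
    simp only [Function.comp, ha]
    ring

theorem lv_vol (g : ℝ → (Fin D → ℝ) → (Fin D → ℝ))
    (hg : ContDiff ℝ 1 (Function.uncurry g))
    (Φ : ℝ → (Fin D → ℝ) → (Fin D → ℝ)) (h0 : ∀ x, Φ 0 x = x)
    (hΦ : ∀ x t, HasDerivAt (fun u => Φ u x) (g t (Φ t x)) t) (T : ℝ) (hT : 0 ≤ T)
    (hinj : Function.Injective (Φ T)) (S : Set (Fin D → ℝ)) (hS : MeasurableSet S) :
    volume (Φ T '' S) = ∫⁻ x in S, ENNReal.ofReal (Real.exp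
      (∫ s in (0:ℝ)..T, ∑ d, fderiv ℝ (g s) (Φ s x) (Pi.single d 1) d)) := by
  choose J hJ hdet using lv_main g hg Φ h0 hΦ T hT
  rw [← lintegral_abs_det_fderiv_eq_addHaar_image volume hS
    (fun x _ => (hJ x).hasFDerivWithinAt) hinj.injOn]
  refine lintegral_congr fun x => ?_
  rw [hdet, abs_of_pos (Real.exp_pos _)]

/-- a nonzero divergence at the initial point contradicts preservation of volume -/
theorem lv_forward (g : ℝ → (Fin D → ℝ) → (Fin D → ℝ))
    (hg : ContDiff ℝ 1 (Function.uncurry g))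
    (Φ : ℝ → (Fin D → ℝ) → (Fin D → ℝ)) (h0 : ∀ x, Φ 0 x = x)
    (hΦ : ∀ x t, HasDerivAt (fun u => Φ u x) (g t (Φ t x)) t)
    (hinj : ∀ T, 0 ≤ T → Function.Injective (Φ T))
    (hmp : ∀ T, 0 ≤ T → MeasurePreserving (Φ T) volume volume) (y0 : Fin D → ℝ) :
    ∑ d, fderiv ℝ (g 0) y0 (Pi.single d 1) d = 0 := by
  by_contra hne
  set a : ℝ × (Fin D → ℝ) → ℝ := fun p => ∑ d, fderiv ℝ (g p.1) p.2 (Pi.single d 1) d with ha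
  have hac : Continuous a := by
    refine continuous_finsetSum _ fun d _ => ?_
    exact (continuous_apply d).comp ((lv_contG g hg).clm_apply continuous_const)
  set d0 : ℝ := a (0, y0) with hd0
  have hd0ne : d0 ≠ 0 := hne
  set c : ℝ := |d0| / 2 with hcdef
  have hcpos : 0 < c := by positivity
  obtain ⟨ρ, hρ, hball⟩ := Metric.continuousAt_iff.1 (hac.continuousAt (x := (0, y0))) c hcpos
  have hc : ∀ x, Continuous (fun u => Φ u x) := fun x =>
    continuous_iff_continuousAt.2 fun t => (hΦ x t).continuousAt
  obtain ⟨δ, hδ, C, hC, htube⟩ := lv_tube g hg Φ h0 hΦ 1 zero_le_one y0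
  obtain ⟨η, hη, hη'⟩ := Metric.continuousAt_iff.1 ((hc y0).continuousAt (x := 0)) (ρ / 2)
    (by positivity)
  set T : ℝ := min 1 (min (η / 2) (ρ / 2)) with hTdef
  have hTpos : 0 < T := by positivity
  have hT1 : T ≤ 1 := min_le_left _ _
  have hT2 : T ≤ η / 2 := (min_le_right _ _).trans (min_le_left _ _)
  have hT3 : T ≤ ρ / 2 := (min_le_right _ _).trans (min_le_right _ _)
  set r : ℝ := min δ (ρ / (4 * C)) with hrdef
  have hrpos : 0 < r := by positivity
  have hclose : ∀ x ∈ Metric.closedBall y0 r, ∀ s ∈ Icc 0 T, |a (s, Φ s x) - d0| ≤ c := by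
    intro x hx s hs
    rw [Metric.mem_closedBall, dist_eq_norm] at hx
    have h1 := htube x (hx.trans (min_le_left _ _)) s ⟨hs.1, hs.2.trans hT1⟩
    have h2 : C * ‖x - y0‖ ≤ ρ / 4 := by
      have := hx.trans (min_le_right _ _)
      rw [le_div_iff₀ (by positivity)] at this
      linarith
    have h3 : dist (Φ s y0) (Φ 0 y0) < ρ / 2 := hη' (by
      rw [Real.dist_eq, sub_zero, abs_of_nonneg hs.1]
      linarith [hs.2])
    rw [h0] at h3
    have h4 : dist (Φ s x) y0 < ρ := by
      have := dist_triangle (Φ s x) (Φ s y0) y0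
      rw [dist_eq_norm (Φ s x) (Φ s y0)] at this
      linarith
    have h5 : dist ((s, Φ s x) : ℝ × (Fin D → ℝ)) (0, y0) < ρ := by
      rw [Prod.dist_eq, max_lt_iff]
      refine ⟨?_, h4⟩
      simp only [Real.dist_eq, sub_zero, abs_of_nonneg hs.1]
      linarith [hs.2]
    exact (hball h5).le
  have hint : ∀ x ∈ Metric.closedBall y0 r,
      |(∫ s in (0:ℝ)..T, a (s, Φ s x)) - T * d0| ≤ c * T := by
    intro x hx
    have hcont : Continuous (fun s => a (s, Φ s x)) := hac.comp (continuous_id.prodMk (hc x))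
    have h1 : (∫ s in (0:ℝ)..T, (a (s, Φ s x) - d0)) = (∫ s in (0:ℝ)..T, a (s, Φ s x)) - T * d0 := by
      rw [intervalIntegral.integral_sub (hcont.intervalIntegrable _ _) (by simp)]
      simp
    rw [← h1, ← Real.norm_eq_abs]
    have := intervalIntegral.norm_integral_le_of_norm_le_const (a := 0) (b := T) (C := c)
      (f := fun s => a (s, Φ s x) - d0) (fun s hs => by
        rw [uIoc_of_le hTpos.le] at hs
        exact hclose x hx s ⟨hs.1.le, hs.2⟩)
    rwa [sub_zero, abs_of_pos hTpos] at this
  set B := Metric.closedBall y0 r with hB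
  have hBc : IsCompact B := isCompact_closedBall _ _
  have hvB : 0 < volume B := Metric.measure_closedBall_pos _ _ hrpos
  have hvB' : volume B ≠ ⊤ := hBc.measure_lt_top.ne
  have hΦc : Continuous (Φ T) := by
    refine continuous_iff_continuousAt.2 fun x => ?_
    obtain ⟨J, hJ, _⟩ := lv_main g hg Φ h0 hΦ T hTpos.le x
    exact hJ.continuousAt
  have hv := lv_vol g hg Φ h0 hΦ T hTpos.le (hinj T hTpos.le) B hBc.measurableSet
  have hv2 : volume (Φ T '' B) = volume B := by
    rw [← (hmp T hTpos.le).measure_preimage (hBc.image hΦc).measurableSet.nullMeasurableSet,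
      (hinj T hTpos.le).preimage_image]
  rw [hv2] at hv
  rcases lt_or_gt_of_ne hd0ne with hneg | hpos
  · have hle : volume B ≤ ENNReal.ofReal (Real.exp (-(c * T))) * volume B := by
      rw [← setLIntegral_const]
      conv_lhs => rw [hv]
      refine setLIntegral_mono' hBc.measurableSet fun x hx => ?_
      refine ENNReal.ofReal_le_ofReal (Real.exp_le_exp.2 ?_)
      have h1 := (abs_le.1 (hint x hx)).2
      have h2 : d0 = -(2 * c) := by rw [hcdef, abs_of_neg hneg]; ring
      rw [h2] at h1
      change (∫ s in (0:ℝ)..T, a (s, Φ s x)) ≤ _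
      linarith
    have hlt : ENNReal.ofReal (Real.exp (-(c * T))) < 1 := by
      rw [ENNReal.ofReal_lt_one, Real.exp_lt_one_iff]
      have := mul_pos hcpos hTpos
      linarith
    have := ENNReal.mul_lt_mul_left hvB.ne' hvB' hlt
    rw [one_mul] at this
    exact absurd hle (not_le.2 this)
  · have hle : ENNReal.ofReal (Real.exp (c * T)) * volume B ≤ volume B := by
      rw [← setLIntegral_const]
      conv_rhs => rw [hv]
      refine setLIntegral_mono' hBc.measurableSet fun x hx => ?_
      refine ENNReal.ofReal_le_ofReal (Real.exp_le_exp.2 ?_)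
      have h1 := (abs_le.1 (hint x hx)).1
      have h2 : d0 = 2 * c := by rw [hcdef, abs_of_pos hpos]; ring
      rw [h2] at h1
      change _ ≤ (∫ s in (0:ℝ)..T, a (s, Φ s x))
      linarith
    have hlt : 1 < ENNReal.ofReal (Real.exp (c * T)) := by
      rw [ENNReal.one_lt_ofReal, Real.one_lt_exp_iff]
      exact mul_pos hcpos hTpos
    have := ENNReal.mul_lt_mul_left hvB.ne' hvB' hlt
    rw [one_mul] at this
    exact absurd hle (not_le.2 this)

end LiouvilleAux

/-- Liouville: For a smooth vector field `f` on `[0,∞) × ℝᴰ` with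
flow `φ τ T x = y(τ+T)` where `y' = f(t,y)`, `y(τ) = x`, the flow map preserves
Lebesgue measure for all initial times `τ ≥ 0` and time spans `T ≥ 0` if and
only if the divergence `div_y f = Σ_d ∂f_d/∂y_d` vanishes identically. -/
theorem stmt9 {D : ℕ}
    (f : ℝ → (Fin D → ℝ) → (Fin D → ℝ))
    (hf : ContDiff ℝ (⊤ : ℕ∞) (fun p : ℝ × (Fin D → ℝ) => f p.1 p.2))
    (φ : ℝ → ℝ → (Fin D → ℝ) → (Fin D → ℝ))
    (hφ0 : ∀ τ x, φ τ 0 x = x)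
    (hφ : ∀ τ x T, 0 ≤ τ →
      HasDerivAt (fun u => φ τ u x) (f (τ + T) (φ τ T x)) T) :
    (∀ τ ≥ (0:ℝ), ∀ T ≥ (0:ℝ), MeasurePreserving (φ τ T) volume volume) ↔
    (∀ t ≥ (0:ℝ), ∀ y : Fin D → ℝ,
      ∑ d : Fin D, fderiv ℝ (f t) y (Pi.single d 1) d = 0) := by
  have hgτ : ∀ τ : ℝ, ContDiff ℝ 1 (Function.uncurry (fun t => f (τ + t))) := by
    intro τ
    have h1 : ContDiff ℝ 1 (fun p : ℝ × (Fin D → ℝ) => f p.1 p.2) := hf.of_le (by simp)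
    have h2 : Function.uncurry (fun t => f (τ + t)) =
        (fun p : ℝ × (Fin D → ℝ) => f p.1 p.2) ∘
          (fun p : ℝ × (Fin D → ℝ) => (τ + p.1, p.2)) := rfl
    rw [h2]
    exact h1.comp (by fun_prop)
  have hΦ : ∀ τ : ℝ, 0 ≤ τ → ∀ x t, HasDerivAt (fun u => φ τ u x) (f (τ + t) (φ τ t x)) t :=
    fun τ hτ x t => hφ τ x t hτ
  have hleft : ∀ τ T : ℝ, 0 ≤ τ → 0 ≤ T → ∀ x, φ (τ + T) (-T) (φ τ T x) = x := by
    intro τ T hτ hT x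
    have := lv_uniq (fun t => f (τ + T + t)) (hgτ (τ + T))
      (fun u => φ (τ + T) u (φ τ T x)) (fun u => φ τ (T + u) x)
      (fun t => hΦ (τ + T) (by positivity) _ t) (fun t => by
        have h := (hΦ τ hτ x (T + t)).comp_const_add T t
        rwa [← add_assoc] at h) (by simp [hφ0])
    have := congrFun this (-T)
    simpa [hφ0] using this
  have hright : ∀ τ T : ℝ, 0 ≤ τ → 0 ≤ T → ∀ z, φ τ T (φ (τ + T) (-T) z) = z := by
    intro τ T hτ hT z
    have := lv_uniq (fun t => f (τ + t)) (hgτ τ)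
      (fun u => φ τ u (φ (τ + T) (-T) z)) (fun u => φ (τ + T) (-T + u) z)
      (fun t => hΦ τ hτ _ t) (fun t => by
        have h := (hΦ (τ + T) (by positivity) z (-T + t)).comp_const_add (-T) t
        have e : τ + T + (-T + t) = τ + t := by ring
        rwa [e] at h) (by simp [hφ0])
    have := congrFun this T
    simpa [hφ0] using this
  have hinj : ∀ τ T : ℝ, 0 ≤ τ → 0 ≤ T → Function.Injective (φ τ T) := fun τ T hτ hT =>
    Function.LeftInverse.injective (hleft τ T hτ hT)
  constructor
  · intro hmp t ht y
    have := lv_forward (fun s => f (t + s)) (hgτ t) (φ t) (hφ0 t) (hΦ t ht)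
      (fun T hT => hinj t T ht hT) (fun T hT => hmp t ht T hT) y
    simpa using this
  · intro hdiv τ hτ T hT
    have hcont : Continuous (φ τ T) := by
      refine continuous_iff_continuousAt.2 fun x => ?_
      obtain ⟨J, hJ, _⟩ := lv_main (fun s => f (τ + s)) (hgτ τ) (φ τ) (hφ0 τ) (hΦ τ hτ) T hT x
      exact hJ.continuousAt
    refine ⟨hcont.measurable, ?_⟩
    ext S hS
    rw [Measure.map_apply hcont.measurable hS]
    have hv := lv_vol (fun s => f (τ + s)) (hgτ τ) (φ τ) (hφ0 τ) (hΦ τ hτ) T hT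
      (hinj τ T hτ hT) _ (hcont.measurable hS)
    rw [image_preimage_eq _ (Function.RightInverse.surjective (hright τ T hτ hT))] at hv
    rw [hv]
    have h1 : ∀ x, (∫ s in (0:ℝ)..T,
        ∑ d, fderiv ℝ (f (τ + s)) (φ τ s x) (Pi.single d 1) d) = 0 := by
      intro x
      rw [intervalIntegral.integral_congr (g := fun _ => (0:ℝ))]
      · simp
      · intro s hs
        rw [uIcc_of_le hT] at hs
        exact hdiv (τ + s) (add_nonneg hτ hs.1) _
    simp [h1]
end

section
/- Let f : [0,∞) × ℝᴰ → ℝᴰ be a smooth time-dependent vector field with div_y f = 0 for every t. Then f can be written as a sum f = f_{1,2} + f_{2,3} + ⋯ + f_{D−1,D} of D−1 smooth vector fields, where each f_{d,d+1} is 2-Hamiltonian in the d,(d+1)-th variables, i.e., there is a smooth scalar function H_d(t,y) with f_{d,d+1} = (0,…,0, −∂H_d/∂y_{d+1}, ∂H_d/∂y_d, 0,…,0)ᵀ, the nonzero entries being in positions d and d+1. -/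
open scoped Topology ContDiff

theorem fs_param_nat {V : Type} [NormedAddCommGroup V] [NormedSpace ℝ V] [FiniteDimensional ℝ V]
    (n : ℕ) : ∀ {E : Type} [NormedAddCommGroup E] [NormedSpace ℝ E] (K : V × ℝ → E)
    (_ : ContDiff ℝ ∞ K), ContDiff ℝ n (fun x => ∫ s in (0:ℝ)..1, K (x, s)) := by
  induction n with
  | zero =>
    intro E _ _ K hK
    have := hK.continuous
    rw [Nat.cast_zero, contDiff_zero]
    exact intervalIntegral.continuous_parametric_intervalIntegral_of_continuous' (by fun_prop) 0 1
  | succ n ih =>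
    intro E _ _ K hK
    have hKc := hK.continuous
    have hd : ContDiff ℝ ∞ (fun p : V × ℝ =>
        (fderiv ℝ K p).comp (ContinuousLinearMap.inl ℝ V ℝ)) := by
      have h1 : ContDiff ℝ ∞ (fderiv ℝ K) := (contDiff_infty_iff_fderiv.1 hK).2
      exact h1.clm_comp contDiff_const
    have hdc := hd.continuous
    rw [Nat.cast_succ, contDiff_succ_iff_hasFDerivAt]
    refine ⟨fun x => ∫ s in (0:ℝ)..1, (fderiv ℝ K (x, s)).comp (ContinuousLinearMap.inl ℝ V ℝ),
      ih _ hd, fun x => ?_⟩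
    obtain ⟨C, hC⟩ := ((isCompact_closedBall x 1).prod
      (isCompact_Icc (a := (0:ℝ)) (b := 1))).exists_bound_of_continuousOn hdc.continuousOn
    refine intervalIntegral.hasFDerivAt_integral_of_dominated_of_fderiv_le
      (F := fun x s => K (x, s))
      (F' := fun x s => (fderiv ℝ K (x, s)).comp (ContinuousLinearMap.inl ℝ V ℝ))
      (bound := fun _ => C)
      (Metric.closedBall_mem_nhds x one_pos) ?_ ?_ ?_ ?_ ?_ ?_
    · refine Filter.Eventually.of_forall fun y => ?_
      exact (by fun_prop : Continuous fun s => K (y, s)).aestronglyMeasurable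
    · exact (by fun_prop : Continuous fun s => K (x, s)).intervalIntegrable _ _
    · exact (hdc.comp (by fun_prop : Continuous fun s : ℝ => (x, s))).aestronglyMeasurable
    · refine Filter.Eventually.of_forall fun s hs y hy => hC (y, s) ⟨hy, ?_⟩
      rw [Set.uIoc_of_le zero_le_one] at hs
      exact ⟨hs.1.le, hs.2⟩
    · exact intervalIntegrable_const
    · refine Filter.Eventually.of_forall fun s hs y hy => ?_
      have h1 : HasFDerivAt K (fderiv ℝ K (y, s)) (y, s) :=
        (hK.differentiable (by simp) _).hasFDerivAt
      exact h1.comp y (hasFDerivAt_prodMk_left y s)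

section
variable {V : Type} [NormedAddCommGroup V] [NormedSpace ℝ V]

noncomputable def fsPrim (l : V →L[ℝ] ℝ) (v : V) (g : V → ℝ) (x : V) : ℝ :=
  l x * ∫ s in (0:ℝ)..1, g (x - l x • v + (l x * s) • v)

theorem fsPrim_contDiff [FiniteDimensional ℝ V] (l : V →L[ℝ] ℝ) (v : V) {g : V → ℝ}
    (hg : ContDiff ℝ ∞ g) : ContDiff ℝ ∞ (fsPrim l v g) := by
  refine l.contDiff.mul (contDiff_infty.2 fun n => ?_)
  refine fs_param_nat n (fun p : V × ℝ => g (p.1 - l p.1 • v + (l p.1 * p.2) • v)) ?_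
  refine hg.comp ?_
  have : ContDiff ℝ ∞ (fun p : V × ℝ => l p.1) := l.contDiff.comp contDiff_fst
  fun_prop

theorem fsPrim_eq (l : V →L[ℝ] ℝ) (v : V) (g : V → ℝ) (x : V) :
    fsPrim l v g x = ∫ s in (0:ℝ)..(l x), g (x - l x • v + s • v) := by
  have := intervalIntegral.mul_integral_comp_mul_left (a := 0) (b := 1) (c := l x)
    (f := fun s => g (x - l x • v + s • v))
  simpa [fsPrim] using this

theorem fs_line {G : V → ℝ} (hG : Differentiable ℝ G) (x w : V) :
    HasDerivAt (fun τ : ℝ => G (x + τ • w)) (fderiv ℝ G x w) 0 := by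
  have h := (hG (x + (0:ℝ) • w)).hasFDerivAt.comp_hasDerivAt (0:ℝ)
    (((hasDerivAt_id (0:ℝ)).smul_const w).const_add x)
  have h' : HasDerivAt (fun τ : ℝ => G (x + τ • w)) _ 0 := h
  refine h'.congr_deriv ?_
  simp

theorem fsPrim_fderiv [FiniteDimensional ℝ V] (l : V →L[ℝ] ℝ) (v : V) (hl : l v = 1) {g : V → ℝ}
    (hg : ContDiff ℝ ∞ g) (x : V) : fderiv ℝ (fsPrim l v g) x v = g x := by
  have h1 := fs_line ((fsPrim_contDiff l v hg).differentiable (by simp)) x v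
  have h2 : (fun τ : ℝ => fsPrim l v g (x + τ • v)) =
      fun τ => ∫ s in (0:ℝ)..(l x + τ), g (x - l x • v + s • v) := by
    funext τ
    rw [fsPrim_eq]
    have e : x + τ • v - l (x + τ • v) • v = x - l x • v := by
      simp only [map_add, map_smul, hl, smul_eq_mul, mul_one]; module
    rw [e]
    simp [hl]
  rw [h2] at h1
  have hc : Continuous (fun s : ℝ => g (x - l x • v + s • v)) := by
    have := hg.continuous
    fun_prop
  have h3 := (hc.integral_hasStrictDerivAt 0 (l x + 0)).hasDerivAt
  have h4 := h3.comp_const_add (l x) 0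
  have := h1.unique h4
  simpa using this

theorem fs_invariant {g : V → ℝ} (hg : Differentiable ℝ g) (w : V)
    (h : ∀ x, fderiv ℝ g x w = 0) (x : V) (τ : ℝ) : g (x + τ • w) = g x := by
  have hd : ∀ τ : ℝ, HasDerivAt (fun τ : ℝ => g (x + τ • w)) 0 τ := by
    intro τ
    have h' := (hg (x + τ • w)).hasFDerivAt.comp_hasDerivAt τ
      (((hasDerivAt_id τ).smul_const w).const_add x)
    have h'' : HasDerivAt (fun τ : ℝ => g (x + τ • w)) _ τ := h'
    refine h''.congr_deriv ?_
    simp [h]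
  have := is_const_of_deriv_eq_zero (fun τ => (hd τ).differentiableAt)
    (fun τ => (hd τ).deriv) τ 0
  simpa using this

theorem fsPrim_fderiv_zero [FiniteDimensional ℝ V] (l : V →L[ℝ] ℝ) (v w : V) (hl : l w = 0)
    {g : V → ℝ} (hg : ContDiff ℝ ∞ g) (h : ∀ x, fderiv ℝ g x w = 0) (x : V) :
    fderiv ℝ (fsPrim l v g) x w = 0 := by
  have h1 := fs_line ((fsPrim_contDiff l v hg).differentiable (by simp)) x w
  have h2 : (fun τ : ℝ => fsPrim l v g (x + τ • w)) = fun τ => fsPrim l v g x := by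
    funext τ
    rw [fsPrim_eq, fsPrim_eq]
    have e : l (x + τ • w) = l x := by simp [hl]
    rw [e]
    congr 1
    funext s
    rw [← fs_invariant (hg.differentiable (by simp)) w h (x - l x • v + s • v) τ]
    congr 1
    module
  rw [h2] at h1
  exact h1.unique (hasDerivAt_const _ _)

theorem fs_dir_contDiff {g : V → ℝ} (hg : ContDiff ℝ ∞ g) (w : V) :
    ContDiff ℝ ∞ (fun x => fderiv ℝ g x w) :=
  (contDiff_infty_iff_fderiv.1 hg).2.clm_apply contDiff_const

theorem fs_dir_comm {g : V → ℝ} (hg : ContDiff ℝ ∞ g) (v w : V) (x : V) :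
    fderiv ℝ (fun y => fderiv ℝ g y v) x w = fderiv ℝ (fun y => fderiv ℝ g y w) x v := by
  have hd : DifferentiableAt ℝ (fderiv ℝ g) x :=
    ((contDiff_infty_iff_fderiv.1 hg).2.differentiable (by simp)) x
  have hs : IsSymmSndFDerivAt ℝ g x := hg.contDiffAt.isSymmSndFDerivAt (by
    rw [minSmoothness_of_isRCLikeNormedField]; exact WithTop.coe_le_coe.2 (le_top : (2 : ℕ∞) ≤ ⊤))
  rw [fderiv_clm_apply hd (by fun_prop), fderiv_clm_apply hd (by fun_prop)]
  simpa using hs w v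

noncomputable def fsW (l : ℕ → V →L[ℝ] ℝ) (v : ℕ → V) (F : ℕ → V → ℝ) : ℕ → V → ℝ
  | 0 => 0
  | i + 1 => fsPrim (l (i + 1)) (v (i + 1))
      (fun x => fderiv ℝ (fsW l v F i) x (v (i - 1)) - F i x)

theorem fs_main [FiniteDimensional ℝ V] (m : ℕ) (l : ℕ → V →L[ℝ] ℝ) (v : ℕ → V) (F : ℕ → V → ℝ)
    (h1 : ∀ i ≤ m + 1, l i (v i) = 1) (h0 : ∀ i j, i ≠ j → l i (v j) = 0)
    (hF : ∀ i, ContDiff ℝ ∞ (F i))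
    (hdiv : ∀ x, ∑ i ∈ Finset.range (m + 2), fderiv ℝ (F i) x (v i) = 0) :
    ∃ H : ℕ → V → ℝ, (∀ i, ContDiff ℝ ∞ (H i)) ∧
      (∀ x, F 0 x = - fderiv ℝ (H 0) x (v 1)) ∧
      (∀ i < m, ∀ x, F (i + 1) x = fderiv ℝ (H i) x (v i) - fderiv ℝ (H (i + 1)) x (v (i + 2))) ∧
      (∀ x, F (m + 1) x = fderiv ℝ (H m) x (v m)) := by
  have hW : ∀ i, ContDiff ℝ ∞ (fsW l v F i) := by
    intro i
    induction i with
    | zero => exact contDiff_const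
    | succ i ih => exact fsPrim_contDiff _ _ ((fs_dir_contDiff ih _).sub (hF i))
  have hD : ∀ i ≤ m, ∀ x, fderiv ℝ (fsW l v F (i + 1)) x (v (i + 1)) =
      fderiv ℝ (fsW l v F i) x (v (i - 1)) - F i x := by
    intro i hi x
    exact fsPrim_fderiv _ _ (h1 _ (by omega)) ((fs_dir_contDiff (hW i) _).sub (hF i)) x
  have hS : ∀ k ≤ m + 1, ∀ x, fderiv ℝ (fun y => fderiv ℝ (fsW l v F k) y (v (k - 1))) x (v k) =
      - ∑ i ∈ Finset.range k, fderiv ℝ (F i) x (v i) := by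
    intro k
    induction k with
    | zero =>
      intro _ x
      have : fsW l v F 0 = fun _ => 0 := rfl
      simp [this]
    | succ k ih =>
      intro hk x
      rw [fs_dir_comm (hW _), funext (hD k (by omega)), Finset.sum_range_succ,
        Nat.add_sub_cancel]
      rw [fderiv_fun_sub ((fs_dir_contDiff (hW k) _).differentiable (by simp) x)
        ((hF k).differentiable (by simp) x)]
      rw [sub_apply, ih (by omega)]
      ring
  set r : V → ℝ := fun x => F (m + 1) x - fderiv ℝ (fsW l v F (m + 1)) x (v m) with hr
  have hrc : ContDiff ℝ ∞ r := (hF _).sub (fs_dir_contDiff (hW _) _)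
  have hrz : ∀ x, fderiv ℝ r x (v (m + 1)) = 0 := by
    intro x
    have h := hS (m + 1) le_rfl x
    rw [Nat.add_sub_cancel] at h
    rw [hr, fderiv_fun_sub ((hF _).differentiable (by simp) x)
      ((fs_dir_contDiff (hW _) _).differentiable (by simp) x),
      sub_apply, h, ← hdiv x, Finset.sum_range_succ _ (m + 1)]
    ring
  set R := fsPrim (l m) (v m) r with hR
  have hRc : ContDiff ℝ ∞ R := fsPrim_contDiff _ _ hrc
  have hRm : ∀ x, fderiv ℝ R x (v m) = r x := fsPrim_fderiv _ _ (h1 m (by omega)) hrc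
  have hRz : ∀ x, fderiv ℝ R x (v (m + 1)) = 0 :=
    fsPrim_fderiv_zero _ _ _ (h0 _ _ (by omega)) hrc hrz
  have hadd : ∀ x w, fderiv ℝ (fun y => fsW l v F (m + 1) y + R y) x w =
      fderiv ℝ (fsW l v F (m + 1)) x w + fderiv ℝ R x w := by
    intro x w
    rw [fderiv_fun_add ((hW _).differentiable (by simp) x) (hRc.differentiable (by simp) x)]
    rfl
  let H : ℕ → V → ℝ := fun i => if i = m then fun y => fsW l v F (m + 1) y + R y
    else fsW l v F (i + 1)
  have hH : ∀ i ≤ m, ∀ x, fderiv ℝ (H i) x (v (i + 1)) =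
      fderiv ℝ (fsW l v F (i + 1)) x (v (i + 1)) := by
    intro i hi x
    by_cases him : i = m
    · subst him
      simp only [H, if_true, hadd, hRz, add_zero]
    · simp only [H, if_neg him]
  refine ⟨H, ?_, ?_, ?_, ?_⟩
  · intro i
    by_cases him : i = m
    · simp only [H, if_pos him]
      exact (hW _).add hRc
    · simp only [H, if_neg him]
      exact hW _
  · intro x
    have := hD 0 (by omega) x
    rw [hH 0 (by omega), this]
    have : fsW l v F 0 = fun _ => 0 := rfl
    simp [this]
  · intro i hi x
    rw [hH (i + 1) (by omega), hD (i + 1) (by omega)]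
    simp only [H, if_neg hi.ne, Nat.add_sub_cancel]
    ring
  · intro x
    simp only [H, if_true, hadd, hRm, hr]
    ring

end


/-- Feng–Shang decomposition: A smooth divergence-free
time-dependent vector field `f` on `ℝᴰ` (`D = n+1 ≥ 2`) can be written as a sum
`f = f_{1,2} + ⋯ + f_{D-1,D}` of `D-1` smooth vector fields, where
`f_{d,d+1}` is 2-Hamiltonian in the `d,(d+1)`-th variables: it has nonzero
entries only in positions `d` and `d+1`, given by `(-∂H_d/∂y_{d+1}, ∂H_d/∂y_d)`
for a smooth scalar function `H_d(t,y)`. -/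
theorem stmt10 {n : ℕ} (hn : 1 ≤ n)
    (f : ℝ → (Fin (n + 1) → ℝ) → (Fin (n + 1) → ℝ))
    (hf : ContDiff ℝ (⊤ : ℕ∞) (fun p : ℝ × (Fin (n + 1) → ℝ) => f p.1 p.2))
    (hdiv : ∀ t : ℝ, ∀ y : Fin (n + 1) → ℝ,
      ∑ d : Fin (n + 1), fderiv ℝ (f t) y (Pi.single d 1) d = 0) :
    ∃ H : Fin n → ℝ → (Fin (n + 1) → ℝ) → ℝ,
      (∀ d, ContDiff ℝ (⊤ : ℕ∞) (fun p : ℝ × (Fin (n + 1) → ℝ) => H d p.1 p.2)) ∧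
      ∀ t : ℝ, ∀ y : Fin (n + 1) → ℝ, ∀ i : Fin (n + 1),
        f t y i = ∑ d : Fin n,
          (if i = d.castSucc then -(fderiv ℝ (H d t) y (Pi.single d.succ 1))
           else if i = d.succ then fderiv ℝ (H d t) y (Pi.single d.castSucc 1)
           else 0) := by
  obtain ⟨m, rfl⟩ : ∃ m, n = m + 1 := ⟨n - 1, by omega⟩
  let e : ℕ → (Fin (m + 1 + 1) → ℝ) := fun i =>
    if h : i < m + 2 then Pi.single ⟨i, h⟩ 1 else 0
  let l : ℕ → (ℝ × (Fin (m + 1 + 1) → ℝ)) →L[ℝ] ℝ := fun i =>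
    if h : i < m + 2 then
      (ContinuousLinearMap.proj (R := ℝ) (φ := fun _ : Fin (m + 1 + 1) => ℝ) ⟨i, h⟩).comp
        (ContinuousLinearMap.snd ℝ ℝ (Fin (m + 1 + 1) → ℝ))
    else 0
  let F : ℕ → (ℝ × (Fin (m + 1 + 1) → ℝ)) → ℝ := fun i p =>
    if h : i < m + 2 then f p.1 p.2 ⟨i, h⟩ else 0
  have hfi : ∀ i, ContDiff ℝ ∞ (fun p : ℝ × (Fin (m + 1 + 1) → ℝ) => f p.1 p.2 i) :=
    contDiff_pi.1 hf
  have he : ∀ i : Fin (m + 1 + 1), e i.val = Pi.single i 1 := by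
    intro i
    simp only [e, dif_pos i.isLt, Fin.eta]
  have hFi : ∀ i : Fin (m + 1 + 1), F i.val = fun p => f p.1 p.2 i := by
    intro i
    funext p
    simp only [F, dif_pos i.isLt, Fin.eta]
  have hslice : ∀ (G : ℝ × (Fin (m + 1 + 1) → ℝ) → ℝ), ContDiff ℝ ∞ G → ∀ t y w,
      fderiv ℝ (fun z => G (t, z)) y w = fderiv ℝ G (t, y) (0, w) := by
    intro G hG t y w
    have h := ((hG.differentiable (by simp)) (t, y)).hasFDerivAt.comp y
      (hasFDerivAt_prodMk_right (𝕜 := ℝ) t y)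
    have h' : HasFDerivAt (fun z => G (t, z)) _ y := h
    rw [h'.fderiv]
    rfl
  obtain ⟨H, hHc, hH0, hHi, hHm⟩ := fs_main m l (fun i => (0, e i)) F
    (by
      intro i hi
      simp [l, e, show i < m + 2 by omega])
    (by
      intro i j hij
      by_cases hi : i < m + 2 <;> by_cases hj : j < m + 2 <;> simp [l, e, hi, hj, hij])
    (by
      intro i
      by_cases hi : i < m + 2
      · have := hFi ⟨i, hi⟩
        simp only at this
        rw [this]
        exact hfi _
      · simp only [F, dif_neg hi]
        exact contDiff_const)
    (by
      rintro ⟨t, y⟩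
      rw [Finset.sum_range]
      refine Eq.trans ?_ (hdiv t y)
      refine Finset.sum_congr rfl fun i _ => ?_
      rw [hFi, he, ← hslice _ (hfi i)]
      have hd : DifferentiableAt ℝ (f t) y := by
        have : ContDiff ℝ ∞ (f t) := hf.comp (contDiff_prodMk_right t)
        exact this.differentiable (by simp) y
      have := (hasFDerivAt_pi'.1 hd.hasFDerivAt i).fderiv
      simp only at this ⊢
      rw [this]
      rfl)
  refine ⟨fun d t y => H d.val (t, y), fun d => hHc d.val, fun t y i => ?_⟩
  have hsplit : ∀ A B : Fin (m + 1) → ℝ, ∑ d : Fin (m + 1),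
      (if i = d.castSucc then A d else if i = d.succ then B d else 0) =
      (∑ d : Fin (m + 1), if i = d.castSucc then A d else 0) +
      ∑ d : Fin (m + 1), if i = d.succ then B d else 0 := by
    intro A B
    rw [← Finset.sum_add_distrib]
    refine Finset.sum_congr rfl fun d _ => ?_
    by_cases h : i = d.castSucc
    · have : i ≠ d.succ := by
        rw [h]; intro h'; have := congrArg Fin.val h'; simp at this
      rw [if_pos h, if_pos h, if_neg this, add_zero]
    · rw [if_neg h, if_neg h, zero_add]
  rw [hsplit]
  have hd : ∀ (d : Fin (m + 1)) (j : Fin (m + 1 + 1)),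
      fderiv ℝ (fun z => H d.val (t, z)) y (Pi.single j 1) =
        fderiv ℝ (H d.val) (t, y) (0, e j.val) := by
    intro d j
    rw [hslice _ (hHc _), he]
  simp only [hd]
  have hL : f t y i = F i.val (t, y) := by rw [hFi]
  rw [hL]
  have hA : (∑ d : Fin (m + 1), if i = d.castSucc then
      -fderiv ℝ (H d.val) (t, y) (0, e d.succ.val) else 0) =
      if i.val < m + 1 then -fderiv ℝ (H i.val) (t, y) (0, e (i.val + 1)) else 0 := by
    by_cases hi : i.val < m + 1
    · rw [if_pos hi, Finset.sum_eq_single (⟨i.val, hi⟩ : Fin (m + 1))]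
      · exact if_pos (Fin.ext rfl)
      · intro d _ hne
        rw [if_neg]
        intro h; apply hne; apply Fin.ext; exact (congrArg Fin.val h).symm
      · simp
    · rw [if_neg hi]
      refine Finset.sum_eq_zero fun d _ => if_neg ?_
      intro h; apply hi; rw [h]; exact d.isLt
  have hB : (∑ d : Fin (m + 1), if i = d.succ then
      fderiv ℝ (H d.val) (t, y) (0, e d.castSucc.val) else 0) =
      if 0 < i.val then fderiv ℝ (H (i.val - 1)) (t, y) (0, e (i.val - 1)) else 0 := by
    by_cases hi : 0 < i.val
    · have hlt := i.isLt
      rw [if_pos hi, Finset.sum_eq_single (⟨i.val - 1, by omega⟩ : Fin (m + 1))]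
      · rw [if_pos (Fin.ext (by simp only [Fin.val_succ]; omega))]; rfl
      · intro d _ hne
        rw [if_neg]
        intro h; apply hne; apply Fin.ext; simp [h]
      · simp
    · rw [if_neg hi]
      refine Finset.sum_eq_zero fun d _ => if_neg ?_
      intro h; apply hi; rw [h]; simp
  rw [hA, hB]
  have hlt := i.isLt
  generalize i.val = k at hlt
  rcases k with _ | k
  · simp [hH0 (t, y)]
  · rcases Nat.lt_or_ge k m with hk | hk
    · rw [hHi k hk, if_pos (by omega), if_pos (by omega), Nat.add_sub_cancel]
      ring
    · obtain rfl : k = m := by omega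
      rw [hHm, if_neg (by omega), if_pos (by omega), Nat.add_sub_cancel]
      ring
end

section
/- Let U ⊆ ℝᴰ be compact and let φ_{τ,T,f} be the time-T flow starting at time τ of y' = f(t,y) where f is smooth and separable 2-Hamiltonian in the d,(d+1)-th variables. Then φ_{τ,T,f} lies in the sup-norm closure over U of the set Ψ of compositions of additive coupling modules (measure-preserving neural networks) whose control networks satisfy the compact-Lipschitz and universal-approximation assumptions. -/
open Set

/-- The upper additive coupling module: `x̂[:s] = x[:s] + f_net(x[s:])`,
`x̂[s:] = x[s:]` (indices `i` with `i < s-1` form the first block). -/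
def upModule (D s : ℕ)
    (f : ({i : Fin D // ¬ i.val < s - 1} → ℝ) → ({i : Fin D // i.val < s - 1} → ℝ)) :
    (Fin D → ℝ) → (Fin D → ℝ) :=
  fun x i => if h : i.val < s - 1 then x i + f (fun j => x j.1) ⟨i, h⟩ else x i

/-- The lower additive coupling module: `x̂[:s] = x[:s]`,
`x̂[s:] = x[s:] + f_net(x[:s])`. -/
def lowModule (D s : ℕ)
    (f : ({i : Fin D // i.val < s - 1} → ℝ) → ({i : Fin D // ¬ i.val < s - 1} → ℝ)) :
    (Fin D → ℝ) → (Fin D → ℝ) :=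
  fun x i => if h : i.val < s - 1 then x i else x i + f (fun j => x j.1) ⟨i, h⟩

/-- Assumption on a control family: every member is Lipschitz on every compact
set, and the family can uniformly approximate every smooth function on every
compact set. -/
def IsGoodFamily {ι κ : Type} [Fintype ι] [Fintype κ]
    (F : Set ((ι → ℝ) → (κ → ℝ))) : Prop :=
  (∀ f ∈ F, ∀ K : Set (ι → ℝ), IsCompact K → ∃ L : NNReal, LipschitzOnWith L f K) ∧
  (∀ V : Set (ι → ℝ), IsCompact V → ∀ g : (ι → ℝ) → (κ → ℝ), ContDiff ℝ (⊤ : ℕ∞) g →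
    ∀ ε > 0, ∃ f ∈ F, ∀ x ∈ V, ‖g x - f x‖ ≤ ε)

/-- The set `Ψ` of measure-preserving neural networks: all finite compositions
of upper and lower coupling modules with controls from the families `NN1`, `NN2`. -/
def Psi (D s : ℕ)
    (NN1 : Set (({i : Fin D // ¬ i.val < s - 1} → ℝ) → ({i : Fin D // i.val < s - 1} → ℝ)))
    (NN2 : Set (({i : Fin D // i.val < s - 1} → ℝ) → ({i : Fin D // ¬ i.val < s - 1} → ℝ))) :
    Set ((Fin D → ℝ) → (Fin D → ℝ)) :=
  { g | ∃ l : List ((Fin D → ℝ) → (Fin D → ℝ)), l ≠ [] ∧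
      (∀ m ∈ l, (∃ f ∈ NN1, m = upModule D s f) ∨ (∃ f ∈ NN2, m = lowModule D s f)) ∧
      g = l.foldl (fun h m => m ∘ h) id }


theorem ode_bdd {E : Type*} [NormedAddCommGroup E] [NormedSpace ℝ E] [ProperSpace E]
    (F : ℝ × ℝ × E → E) (hF : ContDiff ℝ 1 F) (X : ℝ → E → E) (τ T : ℝ) (hT : 0 ≤ T)
    (hX0 : ∀ x, X 0 x = x)
    (hX : ∀ x u, HasDerivAt (fun h => X h x) (F (0, τ + u, X u x)) u)
    (U : Set E) (hU : IsCompact U) :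
    ∃ R : ℝ, ∀ x ∈ U, ∀ u ∈ Icc 0 T, ‖X u x‖ ≤ R := by
  have hXc : ∀ x, Continuous (fun u => X u x) := fun x =>
    continuous_iff_continuousAt.2 fun u => (hX x u).continuousAt
  refine hU.induction_on (p := fun S => ∃ R : ℝ, ∀ x ∈ S, ∀ u ∈ Icc 0 T, ‖X u x‖ ≤ R)
    ⟨0, by simp⟩ (fun s t hst ⟨R, hR⟩ => ⟨R, fun x hx => hR x (hst hx)⟩)
    (fun s t ⟨R, hR⟩ ⟨R', hR'⟩ => ⟨max R R', ?_⟩) ?_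
  · rintro x (hx | hx) u hu
    · exact (hR x hx u hu).trans (le_max_left _ _)
    · exact (hR' x hx u hu).trans (le_max_right _ _)
  intro x0 _
  obtain ⟨M, hM⟩ := isCompact_Icc.exists_bound_of_continuousOn (s := Icc 0 T)
    (f := fun u => X u x0) (hXc x0).continuousOn
  have hcomp : IsCompact (Icc (0:ℝ) 0 ×ˢ (Icc τ (τ+T) ×ˢ Metric.closedBall (0:E) (M+1))) :=
    isCompact_Icc.prod (isCompact_Icc.prod (isCompact_closedBall _ _))
  obtain ⟨L, hL⟩ := (hF.locallyLipschitz.locallyLipschitzOn).exists_lipschitzOnWith_of_compact hcomp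
  have hpos : 0 < Real.exp (L * T) := Real.exp_pos _
  refine ⟨Metric.ball x0 (1/(2 * Real.exp (L*T))), mem_nhdsWithin_of_mem_nhds
    (Metric.ball_mem_nhds _ (by positivity)), M+1, ?_⟩
  intro x hx
  have key : ∀ u ∈ Icc 0 T, dist (X u x) (X u x0) < 1 := by
    by_contra! hcon
    obtain ⟨u1, hu1, hu1'⟩ := hcon
    have hS : IsCompact (Icc 0 T ∩ {u | 1 ≤ dist (X u x) (X u x0)}) :=
      isCompact_Icc.inter_right (isClosed_le continuous_const ((hXc x).dist (hXc x0)))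
    obtain ⟨u, hu, hmin⟩ := hS.exists_isLeast ⟨u1, hu1, hu1'⟩
    have hlt : ∀ v ∈ Ico 0 u, dist (X v x) (X v x0) < 1 := by
      intro v hv
      by_contra! h
      exact absurd (hmin ⟨⟨hv.1, hv.2.le.trans hu.1.2⟩, h⟩) (not_le.2 hv.2)
    have hmem0 : ∀ v ∈ Ico 0 u, ‖X v x0‖ ≤ M := fun v hv => hM v ⟨hv.1, hv.2.le.trans hu.1.2⟩
    have := dist_le_of_trajectories_ODE_of_mem (v := fun t y => F (0, τ + t, y))
      (s := fun _ => Metric.closedBall (0:E) (M+1)) (K := L) (a := 0) (b := u)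
      (f := fun t => X t x) (g := fun t => X t x0) (δ := 1/(2 * Real.exp (L*T)))
      (fun t ht => ?_) (hXc x).continuousOn (fun t ht => (hX x t).hasDerivWithinAt) (fun t ht => ?_)
      (hXc x0).continuousOn (fun t ht => (hX x0 t).hasDerivWithinAt) (fun t ht => ?_) ?_ u
      ⟨hu.1.1, le_rfl⟩
    · have h1 : Real.exp (L * (u - 0)) ≤ Real.exp (L * T) := by
        apply Real.exp_le_exp.2
        rw [sub_zero]
        exact mul_le_mul_of_nonneg_left hu.1.2 L.2
      have h2 : 1/(2 * Real.exp (L*T)) * Real.exp (L * (u - 0)) ≤ 1/2 := by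
        rw [div_mul_eq_mul_div, div_le_div_iff₀ (by positivity) (by norm_num)]
        linarith
      have := hu.2
      simp only [mem_ofPred_eq] at this
      linarith
    · refine LipschitzOnWith.of_dist_le_mul fun y hy z hz => ?_
      have := hL.dist_le_mul (0, τ + t, y) ⟨by simp, ⟨by simp [ht.1], by
        have := ht.2.le.trans hu.1.2; simp [this]⟩, hy⟩ (0, τ+t, z) ⟨by simp, ⟨by simp [ht.1], by
        have := ht.2.le.trans hu.1.2; simp [this]⟩, hz⟩
      simpa [Prod.dist_eq] using this
    · rw [mem_closedBall_zero_iff]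
      have h1 := hlt t ht
      have h2 := hmem0 t ht
      rw [dist_eq_norm] at h1
      have := norm_le_norm_add_norm_sub' (X t x) (X t x0)
      linarith
    · rw [mem_closedBall_zero_iff]
      linarith [hmem0 t ht]
    · simp only [hX0]
      exact (Metric.mem_ball.1 hx).le
  intro u hu
  have h1 := key u hu
  rw [dist_eq_norm] at h1
  have := norm_le_norm_add_norm_sub' (X u x) (X u x0)
  have := hM u hu
  linarith

theorem ode_conv {E : Type*} [NormedAddCommGroup E] [NormedSpace ℝ E] [ProperSpace E]
    (F : ℝ × ℝ × E → E) (hF : ContDiff ℝ 1 F) (X : ℝ → E → E) (τ T : ℝ) (hT : 0 ≤ T)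
    (hX0 : ∀ x, X 0 x = x)
    (hX : ∀ x u, HasDerivAt (fun h => X h x) (F (0, τ + u, X u x)) u)
    (U : Set E) (hU : IsCompact U) (ε : ℝ) (hε : 0 < ε) :
    ∃ n : ℕ, ∀ Y : ℕ → E → E, (∀ x, Y 0 x = x) →
      (∀ k x, Y (k+1) x = Y k x + (T/n) • F (T/n, τ + k*(T/n), Y k x)) →
      ∀ x ∈ U, ‖X T x - Y n x‖ ≤ ε := by
  obtain ⟨R, hR⟩ := ode_bdd F hF X τ T hT hX0 hX U hU
  have hcomp : IsCompact (Icc (0:ℝ) 1 ×ˢ (Icc τ (τ+T) ×ˢ Metric.closedBall (0:E) (R+1))) :=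
    isCompact_Icc.prod (isCompact_Icc.prod (isCompact_closedBall _ _))
  obtain ⟨L, hL⟩ := (hF.locallyLipschitz.locallyLipschitzOn).exists_lipschitzOnWith_of_compact hcomp
  obtain ⟨M', hM'⟩ := hcomp.exists_bound_of_continuousOn hF.continuous.continuousOn
  obtain ⟨M, hM0, hM⟩ : ∃ M : ℝ, 0 ≤ M ∧
      ∀ p ∈ (Icc (0:ℝ) 1 ×ˢ (Icc τ (τ+T) ×ˢ Metric.closedBall (0:E) (R+1))), ‖F p‖ ≤ M :=
    ⟨max M' 0, le_max_right _ _, fun p hp => (hM' p hp).trans (le_max_left _ _)⟩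
  set C : ℝ := L * (1 + M) with hC
  have hC0 : 0 ≤ C := by positivity
  set B : ℝ := C * T * Real.exp (L * T) * T with hB
  obtain ⟨n, hn⟩ := exists_nat_gt (max (max 1 T) (max B (B/ε)))
  have hn1 : (1:ℝ) < n := lt_of_le_of_lt (by simp) hn
  have hnT : T < n := lt_of_le_of_lt (by simp) hn
  have hnB : B < n := lt_of_le_of_lt (by simp) hn
  have hnBε : B/ε < n := lt_of_le_of_lt (by simp) hn
  have hn0 : (0:ℝ) < n := by linarith
  refine ⟨n, fun Y hY0 hY x hx => ?_⟩
  set h : ℝ := T / n with hh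
  have hh0 : 0 ≤ h := by positivity
  have hh1 : h ≤ 1 := by rw [hh, div_le_one hn0]; exact hnT.le
  have hnh : n * h = T := by rw [hh]; field_simp
  have hmemX : ∀ u ∈ Icc 0 T, X u x ∈ Metric.closedBall (0:E) (R+1) := fun u hu => by
    rw [mem_closedBall_zero_iff]; linarith [hR x hx u hu]
  have hlip : ∀ a b : ℝ, 0 ≤ a → a ≤ b → b ≤ T → ‖X b x - X a x‖ ≤ M * (b - a) := by
    intro a b ha hab hb
    refine norm_image_sub_le_of_norm_deriv_le_segment' (f := fun u => X u x)
      (fun u hu => (hX x u).hasDerivWithinAt) (fun u hu => ?_) b ⟨hab, le_rfl⟩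
    have hu' : u ∈ Icc 0 T := ⟨ha.trans hu.1, hu.2.le.trans hb⟩
    exact hM _ ⟨by simp, ⟨by simp [hu'.1], by simp [hu'.2]⟩, hmemX u hu'⟩
  have hstep : ∀ a : ℝ, 0 ≤ a → a + h ≤ T →
      ‖X (a+h) x - (X a x + h • F (h, τ + a, X a x))‖ ≤ C * h * h := by
    intro a ha hah
    have := norm_image_sub_le_of_norm_deriv_le_segment' (a := a) (b := a+h) (C := C*h)
      (f := fun u => X u x - (u - a) • F (h, τ + a, X a x))
      (f' := fun u => F (0, τ + u, X u x) - (1:ℝ) • F (h, τ + a, X a x))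
      (fun u hu => ((hX x u).sub (((hasDerivAt_id u).sub_const a).smul_const _)).hasDerivWithinAt)
      (fun u hu => ?_) (a+h) ⟨by linarith, le_rfl⟩
    · have e : X (a+h) x - (X a x + h • F (h, τ + a, X a x)) =
        X (a + h) x - (a + h - a) • F (h, τ + a, X a x) - (X a x - (a - a) • F (h, τ + a, X a x)) := by
        simp [sub_eq_add_neg]; abel
      rw [e]
      convert this using 2
      ring
    · have hu' : u ∈ Icc 0 T := ⟨ha.trans hu.1, hu.2.le.trans hah⟩
      have ha' : a ∈ Icc 0 T := ⟨ha, by linarith⟩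
      have h1 := hL.dist_le_mul (0, τ + u, X u x)
        ⟨by simp, ⟨by simp [hu'.1], by simp [hu'.2]⟩, hmemX u hu'⟩ (h, τ + a, X a x)
        ⟨⟨hh0, hh1⟩, ⟨by simp [ha'.1], by simp [ha'.2]⟩, hmemX a ha'⟩
      rw [one_smul, ← dist_eq_norm]
      refine h1.trans ?_
      rw [hC, mul_assoc]
      refine mul_le_mul_of_nonneg_left ?_ L.2
      have hMh : 0 ≤ M * h := by positivity
      have hua : u - a ≤ h := by linarith [hu.2]
      have hua0 : 0 ≤ u - a := by linarith [hu.1]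
      rw [Prod.dist_eq, Prod.dist_eq]
      refine max_le ?_ (max_le ?_ ?_)
      · simp only [Real.dist_eq, zero_sub, abs_neg, abs_of_nonneg hh0]; linarith
      · simp only [Real.dist_eq, add_sub_add_left_eq_sub, abs_of_nonneg hua0]; linarith
      · simp only [dist_eq_norm]
        have := hlip a u ha hu.1 (by linarith)
        have : M * (u - a) ≤ M * h := mul_le_mul_of_nonneg_left hua hM0
        linarith
  have hexp : 1 + L * h ≤ Real.exp (L * h) := by linarith [Real.add_one_le_exp (L*h)]
  have hbd : ∀ k : ℕ, k ≤ n → C * h * (k * h) * Real.exp (L * (k * h)) ≤ B / n := by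
    intro k hk
    have hkn : (k:ℝ) ≤ n := by exact_mod_cast hk
    have hkT : k * h ≤ T := by rw [← hnh]; exact mul_le_mul_of_nonneg_right hkn hh0
    have e : B / n = C * h * T * Real.exp (L * T) := by rw [hB, hh]; field_simp
    rw [e]
    have : Real.exp (L * (k * h)) ≤ Real.exp (L * T) :=
      Real.exp_le_exp.2 (mul_le_mul_of_nonneg_left hkT L.2)
    gcongr
  have main : ∀ k : ℕ, k ≤ n →
      ‖X (k * h) x - Y k x‖ ≤ C * h * (k * h) * Real.exp (L * (k * h)) := by
    intro k
    induction k with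
    | zero => intro _; simp [hX0, hY0]
    | succ k ih =>
      intro hk
      have ihk := ih (by omega)
      have hkn : ((k+1 : ℕ):ℝ) ≤ n := by exact_mod_cast hk
      have hkT : ((k+1 : ℕ):ℝ) * h ≤ T := by
        rw [← hnh]; exact mul_le_mul_of_nonneg_right hkn hh0
      push_cast at hkT ⊢
      have hk0 : 0 ≤ k * h := by positivity
      have hle1 : ‖X (k * h) x - Y k x‖ ≤ 1 :=
        ihk.trans ((hbd k (by omega)).trans ((div_le_one hn0).2 hnB.le))
      have hk' : (k * h) ∈ Icc 0 T := ⟨hk0, by linarith⟩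
      have hYm : Y k x ∈ Metric.closedBall (0:E) (R+1) := by
        rw [mem_closedBall_zero_iff]
        have := norm_le_norm_add_norm_sub (X (k * h) x) (Y k x)
        linarith [hR x hx _ hk']
      have hs := hstep (k*h) hk0 (by linarith)
      have hl := hL.dist_le_mul (h, τ + k * h, X (k * h) x)
        ⟨⟨hh0, hh1⟩, ⟨by linarith [hk'.1], by linarith [hk'.2]⟩, hmemX _ hk'⟩
        (h, τ + k * h, Y k x)
        ⟨⟨hh0, hh1⟩, ⟨by linarith [hk'.1], by linarith [hk'.2]⟩, hYm⟩
      have hd : dist ((h, τ + k * h, X (k * h) x) : ℝ × ℝ × E) (h, τ + k * h, Y k x)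
          = ‖X (k * h) x - Y k x‖ := by
        simp [Prod.dist_eq, dist_eq_norm]
      rw [hd, dist_eq_norm] at hl
      set e := ‖X (k * h) x - Y k x‖ with he
      have he0 : 0 ≤ e := norm_nonneg _
      have e1 : X ((k+1) * h) x - Y (k+1) x =
          (X (k * h + h) x - (X (k * h) x + h • F (h, τ + k * h, X (k * h) x)))
          + ((X (k * h) x - Y k x)
            + h • (F (h, τ + k * h, X (k * h) x) - F (h, τ + k * h, Y k x))) := by
        rw [hY, smul_sub, add_one_mul]; abel
      have e2 : ‖X ((k+1) * h) x - Y (k+1) x‖ ≤ C * h * h + (e + h * (L * e)) := by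
        rw [e1]
        refine (norm_add_le _ _).trans (add_le_add hs ((norm_add_le _ _).trans ?_))
        rw [norm_smul, Real.norm_of_nonneg hh0]
        gcongr
      refine e2.trans ?_
      have e3 : Real.exp (L * ((k+1) * h)) = Real.exp (L * (k * h)) * Real.exp (L * h) := by
        rw [← Real.exp_add]; ring_nf
      have e4 : e + h * (L * e) ≤ C * h * (k * h) * Real.exp (L * ((k+1) * h)) := by
        rw [e3]
        calc e + h * (L * e) = e * (1 + L * h) := by ring
          _ ≤ (C * h * (k * h) * Real.exp (L * (k * h))) * Real.exp (L * h) := by gcongr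
          _ = _ := by ring
      have e5 : C * h * h ≤ C * h * h * Real.exp (L * ((k+1) * h)) := by
        refine le_mul_of_one_le_right (by positivity) (Real.one_le_exp (by positivity))
      calc _ ≤ _ := add_le_add e5 e4
        _ = _ := by ring
  have := (main n le_rfl).trans (hbd n le_rfl)
  rw [hnh] at this
  refine this.trans ?_
  rw [div_le_iff₀ hn0]
  rw [div_lt_iff₀ hε] at hnBε
  linarith

/-- Maps which can be approximated by `S` uniformly on compacts. -/
def ApproxBy {D : ℕ} (S : Set ((Fin D → ℝ) → (Fin D → ℝ))) (F : (Fin D → ℝ) → (Fin D → ℝ)) : Prop :=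
  ∀ K : Set (Fin D → ℝ), IsCompact K → ∀ ε > 0, ∃ g ∈ S, ∀ x ∈ K, ‖F x - g x‖ ≤ ε

/-- The shear map adding `h x` to the coordinate `d`. -/
def shear {D : ℕ} (d : Fin D) (h : (Fin D → ℝ) → ℝ) : (Fin D → ℝ) → (Fin D → ℝ) :=
  fun x => x + Pi.single d (h x)

theorem foldl_comp {α : Type*} (l : List (α → α)) (a : α → α) :
    l.foldl (fun h m => m ∘ h) a = l.foldl (fun h m => m ∘ h) id ∘ a := by
  induction l generalizing a with
  | nil => rfl
  | cons m l ih =>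
    simp only [List.foldl_cons]
    rw [ih (m ∘ a), ih (m ∘ id)]
    rfl

theorem Psi_comp {D s : ℕ}
    {NN1 : Set (({i : Fin D // ¬ i.val < s - 1} → ℝ) → ({i : Fin D // i.val < s - 1} → ℝ))}
    {NN2 : Set (({i : Fin D // i.val < s - 1} → ℝ) → ({i : Fin D // ¬ i.val < s - 1} → ℝ))}
    {f g : (Fin D → ℝ) → (Fin D → ℝ)} (hf : f ∈ Psi D s NN1 NN2) (hg : g ∈ Psi D s NN1 NN2) :
    f ∘ g ∈ Psi D s NN1 NN2 := by
  obtain ⟨l, hl, hl', rfl⟩ := hf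
  obtain ⟨m, hm, hm', rfl⟩ := hg
  refine ⟨m ++ l, by simp [hl], ?_, ?_⟩
  · intro a ha
    rcases List.mem_append.1 ha with h | h
    · exact hm' a h
    · exact hl' a h
  · rw [List.foldl_append, ← foldl_comp]

theorem ApproxBy.comp {D : ℕ} {S : Set ((Fin D → ℝ) → (Fin D → ℝ))}
    (hS : ∀ f ∈ S, ∀ g ∈ S, f ∘ g ∈ S) {F G : (Fin D → ℝ) → (Fin D → ℝ)}
    (hF : ApproxBy S F) (hG : ApproxBy S G) (hFc : Continuous F) (hGc : Continuous G) :
    ApproxBy S (F ∘ G) := by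
  intro K hK ε hε
  have hK' : IsCompact (Metric.cthickening 1 (G '' K)) := (hK.image hGc).cthickening
  have huc := hK'.uniformContinuousOn_of_continuous hFc.continuousOn
  obtain ⟨δ, hδ, hδ'⟩ := Metric.uniformContinuousOn_iff_le.1 huc (ε/2) (by positivity)
  obtain ⟨f, hf, hf'⟩ := hF _ hK' (ε/2) (by positivity)
  obtain ⟨g, hg, hg'⟩ := hG K hK (min δ 1) (by positivity)
  refine ⟨f ∘ g, hS f hf g hg, fun x hx => ?_⟩
  have hgx := hg' x hx
  have hGm : G x ∈ Metric.cthickening 1 (G '' K) :=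
    Metric.self_subset_cthickening _ ⟨x, hx, rfl⟩
  have hgm : g x ∈ Metric.cthickening 1 (G '' K) := by
    refine Metric.mem_cthickening_of_dist_le _ (G x) _ _ ⟨x, hx, rfl⟩ ?_
    rw [dist_comm, dist_eq_norm]
    exact hgx.trans (min_le_right _ _)
  have h1 := hδ' _ hGm _ hgm (by rw [dist_eq_norm]; exact hgx.trans (min_le_left _ _))
  rw [dist_eq_norm] at h1
  have h2 := hf' _ hgm
  have := norm_sub_le_norm_sub_add_norm_sub (F (G x)) (F (g x)) (f (g x))
  simp only [Function.comp]
  linarith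

theorem shear_continuous {D : ℕ} (d : Fin D) {h : (Fin D → ℝ) → ℝ} (hh : Continuous h) :
    Continuous (shear d h) := by
  unfold shear
  exact continuous_id.add ((continuous_single d).comp hh)

theorem up_approx {D s : ℕ}
    {NN1 : Set (({i : Fin D // ¬ i.val < s - 1} → ℝ) → ({i : Fin D // i.val < s - 1} → ℝ))}
    {NN2 : Set (({i : Fin D // i.val < s - 1} → ℝ) → ({i : Fin D // ¬ i.val < s - 1} → ℝ))}
    (hNN1 : IsGoodFamily NN1)
    {f : ({i : Fin D // ¬ i.val < s - 1} → ℝ) → ({i : Fin D // i.val < s - 1} → ℝ)}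
    (hf : ContDiff ℝ (⊤ : ℕ∞) f) : ApproxBy (Psi D s NN1 NN2) (upModule D s f) := by
  intro K hK ε hε
  obtain ⟨f', hf', hb⟩ := hNN1.2 ((fun x => fun j => x j.1) '' K)
    (hK.image (by fun_prop)) f hf ε hε
  refine ⟨upModule D s f', ⟨[upModule D s f'], by simp, ?_, rfl⟩, fun x hx => ?_⟩
  · intro m hm
    rw [List.mem_singleton] at hm
    exact Or.inl ⟨f', hf', hm⟩
  · have := hb _ ⟨x, hx, rfl⟩
    rw [pi_norm_le_iff_of_nonneg hε.le] at this ⊢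
    intro i
    by_cases hi : i.val < s - 1
    · simpa [upModule, hi] using this ⟨i, hi⟩
    · simpa [upModule, hi] using hε.le

theorem low_approx {D s : ℕ}
    {NN1 : Set (({i : Fin D // ¬ i.val < s - 1} → ℝ) → ({i : Fin D // i.val < s - 1} → ℝ))}
    {NN2 : Set (({i : Fin D // i.val < s - 1} → ℝ) → ({i : Fin D // ¬ i.val < s - 1} → ℝ))}
    (hNN2 : IsGoodFamily NN2)
    {f : ({i : Fin D // i.val < s - 1} → ℝ) → ({i : Fin D // ¬ i.val < s - 1} → ℝ)}
    (hf : ContDiff ℝ (⊤ : ℕ∞) f) : ApproxBy (Psi D s NN1 NN2) (lowModule D s f) := by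
  intro K hK ε hε
  obtain ⟨f', hf', hb⟩ := hNN2.2 ((fun x => fun j => x j.1) '' K)
    (hK.image (by fun_prop)) f hf ε hε
  refine ⟨lowModule D s f', ⟨[lowModule D s f'], by simp, ?_, rfl⟩, fun x hx => ?_⟩
  · intro m hm
    rw [List.mem_singleton] at hm
    exact Or.inr ⟨f', hf', hm⟩
  · have := hb _ ⟨x, hx, rfl⟩
    rw [pi_norm_le_iff_of_nonneg hε.le] at this ⊢
    intro i
    by_cases hi : i.val < s - 1
    · simpa [lowModule, hi] using hε.le
    · simpa [lowModule, hi] using this ⟨i, hi⟩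

theorem extend_contDiff {D : ℕ} (P : Fin D → Prop) [DecidablePred P] :
    ContDiff ℝ (⊤ : ℕ∞) (fun (z : {i : Fin D // P i} → ℝ) (j : Fin D) =>
      if hj : P j then z ⟨j, hj⟩ else 0) := by
  rw [contDiff_pi]
  intro j
  by_cases hj : P j
  · simp only [hj, dif_pos]
    exact contDiff_apply ℝ ℝ _
  · simp only [hj]
    exact contDiff_const

theorem lift_contDiff {D : ℕ} (P Q : Fin D → Prop) [DecidablePred P] [DecidablePred Q]
    (d : Fin D) {b : (Fin D → ℝ) → ℝ} (hb : ContDiff ℝ (⊤ : ℕ∞) b) :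
    ContDiff ℝ (⊤ : ℕ∞) (fun (z : {i : Fin D // P i} → ℝ) (k : {i : Fin D // Q i}) =>
      if k.1 = d then b (fun j => if hj : P j then z ⟨j, hj⟩ else 0) else 0) := by
  rw [contDiff_pi]
  intro k
  by_cases hk : k.1 = d
  · simp only [hk, if_true]
    exact hb.comp (extend_contDiff P)
  · simp only [hk, if_false]
    exact contDiff_const

theorem basic_shear {D s : ℕ}
    {NN1 : Set (({i : Fin D // ¬ i.val < s - 1} → ℝ) → ({i : Fin D // i.val < s - 1} → ℝ))}
    {NN2 : Set (({i : Fin D // i.val < s - 1} → ℝ) → ({i : Fin D // ¬ i.val < s - 1} → ℝ))}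
    (hNN1 : IsGoodFamily NN1) (hNN2 : IsGoodFamily NN2) (d : Fin D)
    {b : (Fin D → ℝ) → ℝ} (hb : ContDiff ℝ (⊤ : ℕ∞) b)
    (hind : ∀ x y : Fin D → ℝ, (∀ j, ¬ (j.val < s - 1 ↔ d.val < s - 1) → x j = y j) → b x = b y) :
    ApproxBy (Psi D s NN1 NN2) (shear d b) := by
  by_cases hd : d.val < s - 1
  · have e : shear d b = upModule D s (fun z k => if k.1 = d then
        b (fun j => if hj : ¬ j.val < s - 1 then z ⟨j, hj⟩ else 0) else 0) := by
      funext x i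
      by_cases hi : i = d
      · subst hi
        simp only [shear, upModule, hd, dif_pos, Pi.add_apply, Pi.single_eq_same, if_true]
        congr 1
        apply hind
        intro j hj
        have : ¬ j.val < s - 1 := by tauto
        simp [this]
      · simp [shear, upModule, hi]
    rw [e]
    exact up_approx hNN1 (lift_contDiff (fun i : Fin D => ¬ i.val < s - 1) _ d hb)
  · have e : shear d b = lowModule D s (fun z k => if k.1 = d then
        b (fun j => if hj : j.val < s - 1 then z ⟨j, hj⟩ else 0) else 0) := by
      funext x i
      by_cases hi : i = d
      · subst hi
        simp only [shear, lowModule, hd, dif_neg, Pi.add_apply, Pi.single_eq_same, if_true,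
          not_false_eq_true]
        congr 1
        apply hind
        intro j hj
        have : j.val < s - 1 := by tauto
        simp [this]
      · simp [shear, lowModule, hi]
    rw [e]
    exact low_approx hNN2 (lift_contDiff (fun i : Fin D => i.val < s - 1) _ d hb)

theorem exp_shear {D s : ℕ}
    {NN1 : Set (({i : Fin D // ¬ i.val < s - 1} → ℝ) → ({i : Fin D // i.val < s - 1} → ℝ))}
    {NN2 : Set (({i : Fin D // i.val < s - 1} → ℝ) → ({i : Fin D // ¬ i.val < s - 1} → ℝ))}
    (hNN1 : IsGoodFamily NN1) (hNN2 : IsGoodFamily NN2) (d i : Fin D)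
    (hi : ¬ (i.val < s - 1 ↔ d.val < s - 1)) (w : Fin D → ℝ) (hwd : w d = 0) (hwi : w i ≠ 0)
    (c : ℝ) :
    ApproxBy (Psi D s NN1 NN2) (shear d (fun x => c * Real.exp (∑ j, w j * x j))) := by
  have hS : ∀ f ∈ Psi D s NN1 NN2, ∀ g ∈ Psi D s NN1 NN2, f ∘ g ∈ Psi D s NN1 NN2 :=
    fun f hf g hg => Psi_comp hf hg
  have hid : i ≠ d := by rintro rfl; exact hi Iff.rfl
  let a : (Fin D → ℝ) → ℝ := fun x =>
    (w i)⁻¹ * ∑ j, if (j.val < s - 1 ↔ d.val < s - 1) then w j * x j else 0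
  let b : (Fin D → ℝ) → ℝ := fun x =>
    c * Real.exp (∑ j, if (j.val < s - 1 ↔ d.val < s - 1) then 0 else w j * x j)
  have hac : ContDiff ℝ (⊤ : ℕ∞) a := by
    refine contDiff_const.mul (ContDiff.sum fun j _ => ?_)
    split_ifs
    · exact contDiff_const.mul (contDiff_apply ℝ ℝ j)
    · exact contDiff_const
  have hbc : ContDiff ℝ (⊤ : ℕ∞) b := by
    refine contDiff_const.mul (ContDiff.exp (ContDiff.sum fun j _ => ?_))
    split_ifs
    · exact contDiff_const
    · exact contDiff_const.mul (contDiff_apply ℝ ℝ j)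
  have haind : ∀ x y : Fin D → ℝ, (∀ j, ¬ (j.val < s - 1 ↔ i.val < s - 1) → x j = y j) →
      a x = a y := by
    intro x y hxy
    simp only [a]
    congr 1
    refine Finset.sum_congr rfl fun j _ => ?_
    split_ifs with h
    · rw [hxy j (by tauto)]
    · rfl
  have haind' : ∀ x y : Fin D → ℝ, (∀ j, j ≠ i → j ≠ d → x j = y j) → a x = a y := by
    intro x y hxy
    simp only [a]
    congr 1
    refine Finset.sum_congr rfl fun j _ => ?_
    split_ifs with h
    · by_cases hjd : j = d
      · subst hjd; simp [hwd]
      · rw [hxy j (by rintro rfl; exact hi h) hjd]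
    · rfl
  have hbind : ∀ x y : Fin D → ℝ, (∀ j, ¬ (j.val < s - 1 ↔ d.val < s - 1) → x j = y j) →
      b x = b y := by
    intro x y hxy
    simp only [b]
    congr 2
    refine Finset.sum_congr rfl fun j _ => ?_
    split_ifs with h
    · rfl
    · rw [hxy j h]
  have e : shear d (fun x => c * Real.exp (∑ j, w j * x j)) =
      shear i (fun x => - a x) ∘ (shear d b ∘ shear i a) := by
    funext x
    have hb1 : b (x + Pi.single i (a x)) = c * Real.exp (∑ j, w j * x j) := by
      simp only [b]
      congr 2
      have h1 : ∀ j, (if (j.val < s - 1 ↔ d.val < s - 1) then 0 else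
          w j * (x + Pi.single i (a x) : Fin D → ℝ) j) =
          (if (j.val < s - 1 ↔ d.val < s - 1) then 0 else w j * x j) +
          (if j = i then w i * a x else 0) := by
        intro j
        by_cases hj : j = i
        · subst hj; simp [hi, mul_add]
        · simp [hj]
      simp only [h1]
      rw [Finset.sum_add_distrib, Finset.sum_ite_eq' Finset.univ i]
      simp only [Finset.mem_univ, if_true, a]
      rw [← mul_assoc, mul_inv_cancel₀ hwi, one_mul, ← Finset.sum_add_distrib]
      refine Finset.sum_congr rfl fun j _ => ?_
      split_ifs <;> simp
    have ha2 : a (x + Pi.single i (a x) + Pi.single d (c * Real.exp (∑ j, w j * x j))) = a x := by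
      apply haind'
      intro j h1 h2
      simp [h1, h2]
    simp only [shear, Function.comp]
    rw [hb1, ha2, Pi.single_neg]
    abel
  rw [e]
  have hA := basic_shear hNN1 hNN2 i hac haind
  have hA' := basic_shear hNN1 hNN2 i hac.neg (fun x y h => by rw [haind x y h])
  have hB := basic_shear hNN1 hNN2 d hbc hbind
  have cA := shear_continuous i hac.continuous
  have cA' := shear_continuous i hac.neg.continuous
  have cB := shear_continuous d hbc.continuous
  exact ApproxBy.comp hS hA' (ApproxBy.comp hS hB hA cB cA) cA' (cB.comp cA)

/-- The exponential of a linear functional, as a continuous map. -/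
noncomputable def expMap {D : ℕ} (w : Fin D → ℝ) : C(Fin D → ℝ, ℝ) :=
  ⟨fun x => Real.exp (∑ j, w j * x j), by fun_prop⟩

theorem general_shear {D s : ℕ}
    {NN1 : Set (({i : Fin D // ¬ i.val < s - 1} → ℝ) → ({i : Fin D // i.val < s - 1} → ℝ))}
    {NN2 : Set (({i : Fin D // i.val < s - 1} → ℝ) → ({i : Fin D // ¬ i.val < s - 1} → ℝ))}
    (hNN1 : IsGoodFamily NN1) (hNN2 : IsGoodFamily NN2) (d i : Fin D)
    (hi : ¬ (i.val < s - 1 ↔ d.val < s - 1)) (h : (Fin D → ℝ) → ℝ) (hh : Continuous h)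
    (hind : ∀ x y : Fin D → ℝ, (∀ j ≠ d, x j = y j) → h x = h y) :
    ApproxBy (Psi D s NN1 NN2) (shear d h) := by
  have hS : ∀ f ∈ Psi D s NN1 NN2, ∀ g ∈ Psi D s NN1 NN2, f ∘ g ∈ Psi D s NN1 NN2 :=
    fun f hf g hg => Psi_comp hf hg
  have hid : i ≠ d := by rintro rfl; exact hi Iff.rfl
  let G : Set C(Fin D → ℝ, ℝ) := {q | ∃ w : Fin D → ℝ, 0 < w i ∧ q = expMap w}
  let A : Subalgebra ℝ C(Fin D → ℝ, ℝ) := Algebra.adjoin ℝ G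
  have hsep : A.SeparatesPoints := by
    intro x y hxy
    obtain ⟨j, hj⟩ := Function.ne_iff.1 hxy
    have hmem : ∀ w : Fin D → ℝ, 0 < w i → expMap w ∈ A := fun w hw =>
      Algebra.subset_adjoin ⟨w, hw, rfl⟩
    by_cases hxi : x i = y i
    · refine ⟨_, ⟨expMap (Pi.single i 1 + Pi.single j 1), hmem _ ?_, rfl⟩, ?_⟩
      · by_cases hij : i = j
        · subst hij; simp
        · simp [hij]
      · simp [expMap, add_mul, Finset.sum_add_distrib, Pi.single_apply, hxi, hj]
    · refine ⟨_, ⟨expMap (Pi.single i 1), hmem _ (by simp), rfl⟩, ?_⟩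
      simp [expMap, Pi.single_apply, hxi]
  have hupdc : Continuous (fun x : Fin D → ℝ => Function.update x d 0) :=
    continuous_id.update d continuous_const
  have hmon : ∀ q ∈ Submonoid.closure G, ∃ w : Fin D → ℝ, (w = 0 ∨ 0 < w i) ∧ q = expMap w := by
    intro q hq
    induction hq using Submonoid.closure_induction with
    | mem q hq => obtain ⟨w, hw, rfl⟩ := hq; exact ⟨w, Or.inr hw, rfl⟩
    | one => exact ⟨0, Or.inl rfl, by ext x; simp [expMap]⟩
    | mul p q _ _ hp hq =>
      obtain ⟨w, hw, rfl⟩ := hp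
      obtain ⟨v, hv, rfl⟩ := hq
      refine ⟨w + v, ?_, ?_⟩
      · rcases hw with rfl | hw
        · simpa using hv
        · rcases hv with rfl | hv
          · right; simpa using hw
          · right; simpa using add_pos hw hv
      · ext x
        simp [expMap, ← Real.exp_add, add_mul, Finset.sum_add_distrib]
  have hA : ∀ q ∈ A, ∀ c : ℝ,
      ApproxBy (Psi D s NN1 NN2) (shear d (fun x => c * q (Function.update x d 0))) := by
    intro q hq
    have hq' : q ∈ Submodule.span ℝ (Submonoid.closure G : Set C(Fin D → ℝ, ℝ)) := by
      rw [← Algebra.adjoin_eq_span]; exact hq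
    clear hq
    have hconst : ∀ c : ℝ, ApproxBy (Psi D s NN1 NN2) (shear d (fun _ => c)) := fun c =>
      basic_shear hNN1 hNN2 d contDiff_const (fun _ _ _ => rfl)
    induction hq' using Submodule.span_induction with
    | mem q hq =>
      intro c
      obtain ⟨w, hw, rfl⟩ := hmon q hq
      rcases hw with rfl | hw
      · simpa [expMap] using hconst c
      · have := exp_shear hNN1 hNN2 d i hi (Function.update w d 0) (by simp)
          (by rw [Function.update_of_ne hid]; exact hw.ne') c
        convert this using 6 with x j
        simp only [expMap, ContinuousMap.coe_mk]
        congr 1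
        refine Finset.sum_congr rfl fun j _ => ?_
        by_cases hj : j = d
        · subst hj; simp
        · simp [hj]
    | zero => intro c; simpa using hconst 0
    | add p q _ _ hp hq =>
      intro c
      have e : shear d (fun x => c * (p + q) (Function.update x d 0)) =
          shear d (fun x => c * p (Function.update x d 0)) ∘
          shear d (fun x => c * q (Function.update x d 0)) := by
        funext x
        have : ∀ t : ℝ, Function.update (x + Pi.single d t) d 0 = Function.update x d 0 := by
          intro t
          ext j
          by_cases hj : j = d
          · subst hj; simp
          · simp [hj]
        simp only [shear, Function.comp, this, ContinuousMap.add_apply, mul_add, Pi.single_add]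
        abel
      rw [e]
      exact ApproxBy.comp hS (hp c) (hq c)
        (shear_continuous d (continuous_const.mul (p.continuous.comp hupdc)))
        (shear_continuous d (continuous_const.mul (q.continuous.comp hupdc)))
    | smul a q _ hq =>
      intro c
      have := hq (c * a)
      simpa [mul_assoc] using this
  intro K hK ε hε
  obtain ⟨q, hq, hqb⟩ :=
    ContinuousMap.exists_mem_subalgebra_near_continuous_of_isCompact_of_separatesPoints hsep
      ⟨h, hh⟩ (hK.image hupdc) (half_pos hε)
  obtain ⟨g, hg, hgb⟩ := hA q hq 1 K hK (ε/2) (half_pos hε)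
  refine ⟨g, hg, fun x hx => ?_⟩
  have h1 := hgb x hx
  have h2 := hqb _ ⟨x, hx, rfl⟩
  have h3 : h (Function.update x d 0) = h x := hind _ _ (fun j hj => by simp [hj])
  simp only [ContinuousMap.coe_mk, h3] at h2
  have h4 : ‖shear d h x - shear d (fun x => 1 * q (Function.update x d 0)) x‖ ≤ ε/2 := by
    simp only [shear, one_mul, add_sub_add_left_eq_sub]
    rw [← Pi.single_sub, pi_norm_le_iff_of_nonneg (half_pos hε).le]
    intro j
    by_cases hj : j = d
    · subst hj
      rw [Pi.single_eq_same, norm_sub_rev]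
      exact h2.le
    · simpa [hj] using (half_pos hε).le
  have := norm_sub_le_norm_sub_add_norm_sub (shear d h x)
    (shear d (fun x => 1 * q (Function.update x d 0)) x) (g x)
  linarith

/-- Let `f` be a smooth vector field on `[0,∞) × ℝᴰ` that is
separable 2-Hamiltonian in the `d,(d+1)`-th variables, i.e.
`f = (0,…,0, g₁(t, ȳ_d), g₂(t, ȳ_{d+1}), 0,…,0)ᵀ` where `g₁` does not depend on
the `d`-th coordinate and `g₂` does not depend on the `(d+1)`-th coordinate.
Then the time-`T` flow map `φ_{τ,T,f}` lies in the sup-norm closure over any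
compact `U` of the set `Ψ` of measure-preserving neural networks whose control
families satisfy the compact-Lipschitz and universal-approximation
assumptions (`D ≥ s ≥ 2`). -/
theorem stmt17 {D s : ℕ} (hs2 : 2 ≤ s) (hsD : s ≤ D)
    (NN1 : Set (({i : Fin D // ¬ i.val < s - 1} → ℝ) → ({i : Fin D // i.val < s - 1} → ℝ)))
    (NN2 : Set (({i : Fin D // i.val < s - 1} → ℝ) → ({i : Fin D // ¬ i.val < s - 1} → ℝ)))
    (hNN1 : IsGoodFamily NN1) (hNN2 : IsGoodFamily NN2)
    (d d' : Fin D) (hdd' : (d' : ℕ) = (d : ℕ) + 1)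
    (g₁ g₂ : ℝ → (Fin D → ℝ) → ℝ)
    (hg₁ : ContDiff ℝ (⊤ : ℕ∞) (fun p : ℝ × (Fin D → ℝ) => g₁ p.1 p.2))
    (hg₂ : ContDiff ℝ (⊤ : ℕ∞) (fun p : ℝ × (Fin D → ℝ) => g₂ p.1 p.2))
    (hg₁ind : ∀ t : ℝ, ∀ y y' : Fin D → ℝ, (∀ i ≠ d, y i = y' i) → g₁ t y = g₁ t y')
    (hg₂ind : ∀ t : ℝ, ∀ y y' : Fin D → ℝ, (∀ i ≠ d', y i = y' i) → g₂ t y = g₂ t y')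
    (f : ℝ → (Fin D → ℝ) → (Fin D → ℝ))
    (hf : ∀ t y, f t y = Pi.single d (g₁ t y) + Pi.single d' (g₂ t y))
    (φ : ℝ → ℝ → (Fin D → ℝ) → (Fin D → ℝ))
    (hφ0 : ∀ τ' x, φ τ' 0 x = x)
    (hφ : ∀ τ' x u, HasDerivAt (fun h => φ τ' h x) (f (τ' + u) (φ τ' u x)) u)
    (τ T : ℝ) (hτ : 0 ≤ τ) (hT : 0 ≤ T)
    (U : Set (Fin D → ℝ)) (hU : IsCompact U) :
    ∀ ε > 0, ∃ g ∈ Psi D s NN1 NN2, ∀ x ∈ U, ‖φ τ T x - g x‖ ≤ ε := by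
  intro ε hε
  have hS : ∀ f ∈ Psi D s NN1 NN2, ∀ g ∈ Psi D s NN1 NN2, f ∘ g ∈ Psi D s NN1 NN2 :=
    fun f hf g hg => Psi_comp hf hg
  have hopp : ∀ e : Fin D, ∃ i : Fin D, ¬ (i.val < s - 1 ↔ e.val < s - 1) := by
    intro e
    by_cases he : e.val < s - 1
    · exact ⟨⟨s - 1, by omega⟩, by simp [he]⟩
    · exact ⟨⟨0, by omega⟩, by simp only [he, iff_false, not_not]; omega⟩
  obtain ⟨i₁, hi₁⟩ := hopp d
  obtain ⟨i₂, hi₂⟩ := hopp d'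
  let F : ℝ × ℝ × (Fin D → ℝ) → (Fin D → ℝ) := fun p =>
    Pi.single d (g₁ p.2.1 p.2.2) +
      Pi.single d' (g₂ p.2.1 (p.2.2 + Pi.single d (p.1 * g₁ p.2.1 p.2.2)))
  have hsing : ∀ (e : Fin D) (q : ℝ × ℝ × (Fin D → ℝ) → ℝ), ContDiff ℝ (⊤ : ℕ∞) q →
      ContDiff ℝ (⊤ : ℕ∞) (fun p => (Pi.single e (q p) : Fin D → ℝ)) := by
    intro e q hq
    rw [contDiff_pi]
    intro j
    by_cases hj : j = e
    · subst hj; simpa using hq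
    · simpa [hj] using contDiff_const
  have hG1 : ContDiff ℝ (⊤ : ℕ∞) (fun p : ℝ × ℝ × (Fin D → ℝ) => g₁ p.2.1 p.2.2) :=
    hg₁.comp contDiff_snd
  have hFc : ContDiff ℝ (⊤ : ℕ∞) F := by
    refine (hsing d _ hG1).add (hsing d' _ ?_)
    exact hg₂.comp (contDiff_snd.fst.prodMk (contDiff_snd.snd.add
      (hsing d _ (contDiff_fst.mul hG1))))
  have hF0 : ∀ t y, F (0, t, y) = f t y := by
    intro t y
    simp [F, hf]
  obtain ⟨n, hn⟩ := ode_conv F (hFc.of_le (by exact_mod_cast le_top)) (fun u x => φ τ u x) τ T hT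
    (hφ0 τ) (fun x u => by rw [hF0]; exact hφ τ x u) U hU (ε/2) (half_pos hε)
  let St : ℝ → ℝ → (Fin D → ℝ) → (Fin D → ℝ) := fun h t =>
    shear d' (fun x => h * g₂ t x) ∘ shear d (fun x => h * g₁ t x)
  have hc1 : ∀ t, Continuous (g₁ t) := fun t =>
    hg₁.continuous.comp (Continuous.prodMk_right t)
  have hc2 : ∀ t, Continuous (g₂ t) := fun t =>
    hg₂.continuous.comp (Continuous.prodMk_right t)
  have hStc : ∀ h t, Continuous (St h t) := fun h t =>
    (shear_continuous d' (continuous_const.mul (hc2 t))).comp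
      (shear_continuous d (continuous_const.mul (hc1 t)))
  have hSta : ∀ h t, ApproxBy (Psi D s NN1 NN2) (St h t) := fun h t =>
    ApproxBy.comp hS
      (general_shear hNN1 hNN2 d' i₂ hi₂ _ (continuous_const.mul (hc2 t))
        (fun x y hxy => by rw [hg₂ind t x y hxy]))
      (general_shear hNN1 hNN2 d i₁ hi₁ _ (continuous_const.mul (hc1 t))
        (fun x y hxy => by rw [hg₁ind t x y hxy]))
      (shear_continuous d' (continuous_const.mul (hc2 t)))
      (shear_continuous d (continuous_const.mul (hc1 t)))
  have hStF : ∀ h t x, St h t x = x + h • F (h, t, x) := by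
    intro h t x
    simp only [St, shear, Function.comp, F, smul_add, ← Pi.single_smul, smul_eq_mul]
    abel
  let Y : ℕ → (Fin D → ℝ) → (Fin D → ℝ) := fun k =>
    Nat.rec id (fun k y => St (T/n) (τ + k * (T/n)) ∘ y) k
  have hYs : ∀ k, Y (k+1) = St (T/n) (τ + k * (T/n)) ∘ Y k := fun k => rfl
  have hY : ∀ k, Continuous (Y k) ∧ ApproxBy (Psi D s NN1 NN2) (Y k) := by
    intro k
    induction k with
    | zero =>
      refine ⟨continuous_id, ?_⟩
      have := basic_shear hNN1 hNN2 d (b := fun _ => 0) contDiff_const (fun _ _ _ => rfl)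
      have e : shear d (fun _ => 0) = Y 0 := by
        funext x
        simp [shear, Y]
      rwa [e] at this
    | succ k ih =>
      rw [hYs]
      exact ⟨(hStc _ _).comp ih.1, ApproxBy.comp hS (hSta _ _) ih.2 (hStc _ _) ih.1⟩
  have hconv := hn Y (fun x => rfl) (fun k x => by
    rw [hYs]; exact hStF _ _ _)
  obtain ⟨g, hg, hgb⟩ := (hY n).2 U hU (ε/2) (half_pos hε)
  refine ⟨g, hg, fun x hx => ?_⟩
  have h1 := hconv x hx
  have h2 := hgb x hx
  have := norm_sub_le_norm_sub_add_norm_sub (φ τ T x) (Y n x) (g x)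
  linarith
end

section
/- (Main theorem) Let D ≥ 2, 1 ≤ p < ∞, U ⊆ ℝᴰ compact, and let Ψ be the set of finite compositions of additive coupling modules x̂[:s] = x[:s] + f_net₁(x[s:]), x̂[s:] = x[s:] and x̂[:s] = x[:s], x̂[s:] = x[s:] + f_net₂(x[:s]), for fixed 2 ≤ s ≤ D, where the control families are Lipschitz on compacts and can uniformly approximate any smooth function on any compact set. If ψ : U → ℝᴰ is Lebesgue measure-preserving, bounded, and injective, then for every ε > 0 there exists ψ_net ∈ Ψ with ‖ψ − ψ_net‖_{L^p(U)} ≤ ε. -/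
open MeasureTheory

namespace MPNet

/-- `F` only changes the coordinates in `P`, and depends only on the other ones. -/
def IsSh {D : ℕ} {α : Type} [Zero α] (P : Fin D → Prop)
    (F : (Fin D → α) → (Fin D → α)) : Prop :=
  (∀ x i, ¬ P i → F x i = 0) ∧ (∀ x y, (∀ i, ¬ P i → x i = y i) → F x = F y)

lemma isSh_neg {D : ℕ} {P : Fin D → Prop} {F : (Fin D → ℤ) → (Fin D → ℤ)} (h : IsSh P F) :
    IsSh P (fun k => - F k) := by
  refine ⟨fun x i hi => by simp [h.1 x i hi], fun x y hxy => by simp [h.2 x y hxy]⟩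

lemma isSh_inv {D : ℕ} {P : Fin D → Prop} {F : (Fin D → ℤ) → (Fin D → ℤ)} (h : IsSh P F)
    (k : Fin D → ℤ) : (k + F k) + -F (k + F k) = k := by
  have : F (k + F k) = F k := h.2 _ _ (fun i hi => by simp [h.1 k i hi])
  rw [this]; simp

/-- prescribed shears on a finite configuration -/
lemma exists_prescribe {D : ℕ} {ι : Type} (P : Fin D → Prop) (c c' : ι → Fin D → ℤ)
    (hcc : ∀ j i, ¬ P i → c j i = c' j i)
    (hinj : ∀ j j', (∀ i, ¬ P i → c j i = c j' i) → j = j') :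
    ∃ F : (Fin D → ℤ) → (Fin D → ℤ), IsSh P F ∧ ∀ j, c j + F (c j) = c' j := by
  classical
  refine ⟨fun k => if h : ∃ j, ∀ i, ¬ P i → c j i = k i then c' h.choose - c h.choose else 0,
    ⟨?_, ?_⟩, ?_⟩
  · intro x i hi
    by_cases h : ∃ j, ∀ i, ¬ P i → c j i = x i
    · simp only [dif_pos h]
      simp [hcc h.choose i hi]
    · simp only [dif_neg h]; rfl
  · intro x y hxy
    have : (fun j => ∀ i, ¬ P i → c j i = x i) = (fun j => ∀ i, ¬ P i → c j i = y i) := by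
      ext j
      constructor
      · intro h i hi; rw [h i hi, hxy i hi]
      · intro h i hi; rw [h i hi, hxy i hi]
    simp only [this]
  · intro j
    have h : ∃ j', ∀ i, ¬ P i → c j' i = c j i := ⟨j, fun _ _ => rfl⟩
    simp only [dif_pos h]
    have : h.choose = j := hinj _ _ h.choose_spec
    rw [this]; simp

/-- spreading rows -/
lemma exists_spread {D : ℕ} {ι : Type} [Finite ι] (P : Fin D → Prop) (i0 : Fin D) (hi0 : P i0)
    (c : ι → Fin D → ℤ) (hc : Function.Injective c) :
    ∃ F : (Fin D → ℤ) → (Fin D → ℤ), IsSh P F ∧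
      ∀ j j', (∀ i, P i → (c j + F (c j)) i = (c j' + F (c j')) i) → j = j' := by
  classical
  obtain ⟨B, hB⟩ : ∃ B : ℕ, ∀ j, |c j i0| ≤ B := by
    have := Set.finite_range (fun j => (|c j i0|).toNat)
    obtain ⟨B, hB⟩ := this.bddAbove
    refine ⟨B, fun j => ?_⟩
    have : (|c j i0|).toNat ≤ B := hB (Set.mem_range_self j)
    omega
  let mask : (Fin D → ℤ) → (Fin D → ℤ) := fun k i => if P i then 0 else k i
  let n : (Fin D → ℤ) → ℕ := fun k => Encodable.encode (mask k)
  refine ⟨fun k => Pi.single i0 ((2 * B + 1 : ℤ) * n k), ⟨?_, ?_⟩, ?_⟩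
  · intro x i hi
    have : i ≠ i0 := by rintro rfl; exact hi hi0
    simp [this]
  · intro x y hxy
    have : mask x = mask y := by
      ext i
      by_cases h : P i
      · simp [mask, h]
      · simp [mask, h, hxy i h]
    simp [n, this]
  · intro j j' h
    have h0 := h i0 hi0
    simp only [Pi.add_apply, Pi.single_eq_same] at h0
    have hn : n (c j) = n (c j') := by
      have h1 := hB j
      have h2 := hB j'
      rw [abs_le] at h1 h2
      by_contra hne
      have hne' : ((n (c j) : ℤ)) - n (c j') ≠ 0 := by omega
      have h3 : (2 * B + 1 : ℤ) * ((n (c j) : ℤ) - n (c j')) = c j' i0 - c j i0 := by linarith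
      have h4 : (1 : ℤ) ≤ |(n (c j) : ℤ) - n (c j')| := Int.one_le_abs hne'
      have h5 : |c j' i0 - c j i0| ≤ 2 * B := by rw [abs_le]; constructor <;> linarith
      rw [← h3, abs_mul, abs_of_nonneg (by positivity : (0 : ℤ) ≤ 2 * B + 1)] at h5
      nlinarith
    have hm : mask (c j) = mask (c j') := Encodable.encode_injective hn
    apply hc
    ext i
    by_cases hi : P i
    · have := h i hi
      simpa [hn] using this
    · have := congrFun hm i
      simpa [mask, hi] using this

/-- Any injective configuration can be moved to a standard one, invertibly. -/
lemma exists_std {D : ℕ} {ι : Type} [Finite ι] (P : Fin D → Prop) (i0 : Fin D) (hi0 : P i0)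
    (Good : ((Fin D → ℤ) → (Fin D → ℤ)) → Prop)
    (hcomp : ∀ τ₁ τ₂, Good τ₁ → Good τ₂ → Good (τ₂ ∘ τ₁))
    (hP : ∀ F, IsSh P F → Good (fun k => k + F k))
    (hQ : ∀ F, IsSh (fun i => ¬ P i) F → Good (fun k => k + F k))
    (b : ι → Fin D → ℤ)
    (c : ι → Fin D → ℤ) (hc : Function.Injective c) :
    ∃ τ τ', Good τ ∧ Good τ' ∧ (∀ j, τ' (τ (c j)) = c j) ∧
      ∀ j i, ¬ P i → τ (c j) i = b j i := by
  classical
  obtain ⟨F, hF, hFc⟩ := exists_spread P i0 hi0 c hc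
  obtain ⟨H, hH, hHc⟩ := exists_prescribe (fun i => ¬ P i) (fun j => c j + F (c j))
    (fun j i => if P i then (c j + F (c j)) i else b j i)
    (by intro j i hi; simp only [not_not] at hi; simp [hi])
    (by intro j j' h; simp only [not_not] at h; exact hFc j j' h)
  refine ⟨(fun k => k + H k) ∘ (fun k => k + F k), (fun k => k + -F k) ∘ (fun k => k + -H k),
    hcomp _ _ (hP _ hF) (hQ _ hH), hcomp _ _ (hQ _ (isSh_neg hH)) (hP _ (isSh_neg hF)), ?_, ?_⟩
  · intro j
    simp only [Function.comp]
    rw [isSh_inv hH, isSh_inv hF]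
  · intro j i hi
    simp only [Function.comp]
    rw [hHc j]
    simp [hi]

/-- High transitivity. -/
lemma exists_perm {D : ℕ} {ι : Type} [Finite ι] (P : Fin D → Prop) (i0 i1 : Fin D) (hi0 : P i0)
    (hi1 : ¬ P i1)
    (Good : ((Fin D → ℤ) → (Fin D → ℤ)) → Prop)
    (hcomp : ∀ τ₁ τ₂, Good τ₁ → Good τ₂ → Good (τ₂ ∘ τ₁))
    (hP : ∀ F, IsSh P F → Good (fun k => k + F k))
    (hQ : ∀ F, IsSh (fun i => ¬ P i) F → Good (fun k => k + F k))
    (c e : ι → Fin D → ℤ) (hc : Function.Injective c) (he : Function.Injective e) :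
    ∃ τ, Good τ ∧ ∀ j, τ (c j) = e j := by
  classical
  obtain ⟨n, ⟨en⟩⟩ := Finite.exists_equiv_fin ι
  let b : ι → Fin D → ℤ := fun j _ => (en j).val
  obtain ⟨τ₁, τ₁', g1, g1', hinv1, hb1⟩ := exists_std P i0 hi0 Good hcomp hP hQ b c hc
  obtain ⟨τ₂, τ₂', g2, g2', hinv2, hb2⟩ := exists_std P i0 hi0 Good hcomp hP hQ b e he
  obtain ⟨F, hF, hFc⟩ := exists_prescribe P (fun j => τ₁ (c j)) (fun j => τ₂ (e j))
    (fun j i hi => by rw [hb1 j i hi, hb2 j i hi])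
    (fun j j' h => by
      have := h i1 hi1
      rw [hb1 j i1 hi1, hb1 j' i1 hi1] at this
      simp only [b] at this
      apply en.injective
      ext
      exact_mod_cast this)
  refine ⟨τ₂' ∘ ((fun k => k + F k) ∘ τ₁), hcomp _ _ (hcomp _ _ g1 (hP _ hF)) g2', fun j => ?_⟩
  simp only [Function.comp]
  rw [hFc j, hinv2]

/-- grid index -/
noncomputable def q {D : ℕ} (N : ℕ) (x : Fin D → ℝ) : Fin D → ℤ := fun i => ⌊(N : ℝ) * x i⌋

/-- the piecewise translation given by a map of grid indices -/
noncomputable def Tm {D : ℕ} (N : ℕ) (τ : (Fin D → ℤ) → (Fin D → ℤ)) (x : Fin D → ℝ) : Fin D → ℝ :=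
  fun i => x i + ((τ (q N x) i - q N x i : ℤ) : ℝ) / N

lemma q_Tm {D : ℕ} {N : ℕ} (hN : 0 < N) (τ : (Fin D → ℤ) → (Fin D → ℤ)) (x : Fin D → ℝ) :
    q N (Tm N τ x) = τ (q N x) := by
  ext i
  have hN' : (N : ℝ) ≠ 0 := by positivity
  have : (N : ℝ) * Tm N τ x i = (N : ℝ) * x i + ((τ (q N x) i - q N x i : ℤ) : ℝ) := by
    simp only [Tm]; field_simp
  change ⌊(N : ℝ) * Tm N τ x i⌋ = _
  rw [this, Int.floor_add_intCast]
  change q N x i + _ = _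
  ring

lemma Tm_comp {D : ℕ} {N : ℕ} (hN : 0 < N) (τ₁ τ₂ : (Fin D → ℤ) → (Fin D → ℤ)) :
    Tm N (τ₂ ∘ τ₁) = Tm N τ₂ ∘ Tm N τ₁ := by
  funext x i
  have h := q_Tm hN τ₁ x
  have h2 : Tm N τ₂ (Tm N τ₁ x) i =
      Tm N τ₁ x i + ((τ₂ (q N (Tm N τ₁ x)) i - q N (Tm N τ₁ x) i : ℤ) : ℝ) / N := rfl
  simp only [Function.comp]
  rw [h2, h]
  simp only [Tm, Function.comp]
  push_cast
  ring

lemma measurable_q {D : ℕ} (N : ℕ) : Measurable (q (D := D) N) := by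
  refine measurable_pi_lambda _ fun i => ?_
  exact Int.measurable_floor.comp (measurable_const.mul (measurable_pi_apply i))

lemma measurable_Tm {D : ℕ} (N : ℕ) (τ : (Fin D → ℤ) → (Fin D → ℤ)) : Measurable (Tm N τ) := by
  refine measurable_pi_lambda _ fun i => ?_
  have : Measurable (fun k : Fin D → ℤ => ((τ k i - k i : ℤ) : ℝ) / N) := Measurable.of_discrete
  exact (measurable_pi_apply i).add (this.comp (measurable_q N))

/-- shears preserve volume -/
lemma measurePreserving_shear {D : ℕ} (P : Fin D → Prop) (G : (Fin D → ℝ) → (Fin D → ℝ))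
    (hG : IsSh P G) (hm : Measurable G) : MeasurePreserving (fun x => x + G x) volume volume := by
  classical
  let Q : Fin D → Prop := fun i => ¬ P i
  let e := MeasurableEquiv.piEquivPiSubtypeProd (fun _ : Fin D => ℝ) Q
  have he : MeasurePreserving e volume volume :=
    volume_preserving_piEquivPiSubtypeProd (fun _ : Fin D => ℝ) Q
  let g : ({i // Q i} → ℝ) → ({i // ¬ Q i} → ℝ) → ({i // ¬ Q i} → ℝ) :=
    fun b a i => a i + G (e.symm (b, 0)) i.1
  have hg : Measurable (Function.uncurry g) := by
    refine measurable_pi_lambda _ fun i => ?_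
    refine Measurable.add ?_ ?_
    · exact (measurable_pi_apply i).comp measurable_snd
    · refine (measurable_pi_apply i.1).comp (hm.comp (e.symm.measurable.comp ?_))
      exact measurable_fst.prodMk measurable_const
  have hs := MeasurePreserving.skew_product (μa := volume) (μb := volume) (μc := volume)
    (μd := volume) (MeasurePreserving.id volume) hg (Filter.Eventually.of_forall fun b => by
      exact (measurePreserving_add_right volume (fun i : {i // ¬ Q i} => G (e.symm (b, 0)) i.1)).map_eq)
  have := (he.symm e).comp (hs.comp he)
  have hfun : (fun x => x + G x) = e.symm ∘ (fun p => (id p.1, g p.1 p.2)) ∘ e := by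
    funext x
    simp only [Function.comp, id]
    apply e.injective
    rw [MeasurableEquiv.apply_symm_apply]
    ext i
    · change x i.1 + G x i.1 = x i.1
      rw [hG.1 x i.1 i.2, add_zero]
    · change x i.1 + G x i.1 = x i.1 + G (e.symm ((e x).1, 0)) i.1
      rw [hG.2 x (e.symm ((e x).1, 0))]
      intro j hj
      have : (e (e.symm ((e x).1, 0))).1 ⟨j, hj⟩ = (e x).1 ⟨j, hj⟩ := by
        rw [MeasurableEquiv.apply_symm_apply]
      exact this.symm
  rw [hfun]
  exact this

lemma Tm_shear {D : ℕ} (N : ℕ) (F : (Fin D → ℤ) → (Fin D → ℤ)) :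
    Tm N (fun k => k + F k) = fun x => x + (fun i => (F (q N x) i : ℝ) / N) := by
  funext x i
  simp [Tm]

lemma mp_Tm_shear {D : ℕ} (N : ℕ) (P : Fin D → Prop) (F : (Fin D → ℤ) → (Fin D → ℤ))
    (hF : IsSh P F) : MeasurePreserving (Tm N (fun k => k + F k)) volume volume := by
  rw [Tm_shear]
  refine measurePreserving_shear P (fun x => (fun i => (F (q N x) i : ℝ) / N)) ⟨?_, ?_⟩ ?_
  · intro x i hi
    simp [hF.1 _ i hi]
  · intro x y hxy
    have : F (q N x) = F (q N y) := hF.2 _ _ (fun i hi => by simp [q, hxy i hi])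
    simp [this]
  · refine measurable_pi_lambda _ fun i => ?_
    have : Measurable (fun k : Fin D → ℤ => ((F k i : ℤ) : ℝ) / N) := Measurable.of_discrete
    exact this.comp (measurable_q N)

/-- approximability of a map by networks, in measure, with bounds. -/
def Approx {D : ℕ} (Ψ : Set ((Fin D → ℝ) → (Fin D → ℝ))) (T : (Fin D → ℝ) → (Fin D → ℝ)) : Prop :=
  ∀ R : ℝ, ∃ R' : ℝ, ∀ ε > 0, ∃ m ∈ Ψ, (∀ x, ‖x‖ ≤ R → ‖m x‖ ≤ R') ∧
    volume {x | ‖x‖ ≤ R ∧ ε < ‖T x - m x‖} ≤ ENNReal.ofReal ε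

lemma Approx.comp {D : ℕ} {Ψ : Set ((Fin D → ℝ) → (Fin D → ℝ))}
    (hcont : ∀ m ∈ Ψ, Continuous m) (hcomp : ∀ m₁ ∈ Ψ, ∀ m₂ ∈ Ψ, m₂ ∘ m₁ ∈ Ψ)
    {T₁ T₂ : (Fin D → ℝ) → (Fin D → ℝ)} (h1 : Approx Ψ T₁) (h2 : Approx Ψ T₂)
    (hmp : MeasurePreserving T₁ volume volume) : Approx Ψ (T₂ ∘ T₁) := by
  intro R
  obtain ⟨R1, hR1⟩ := h1 R
  obtain ⟨R2, hR2⟩ := h2 (R1 + 1)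
  refine ⟨R2, fun ε hε => ?_⟩
  obtain ⟨m2, hm2, hb2, hv2⟩ := hR2 (ε / 2) (by positivity)
  have huc := (isCompact_closedBall (0 : Fin D → ℝ) (R1 + 1)).uniformContinuousOn_of_continuous
    (hcont m2 hm2).continuousOn
  rw [Metric.uniformContinuousOn_iff] at huc
  obtain ⟨δ, hδ, hδm⟩ := huc (ε / 2) (by positivity)
  have hpos : 0 < min (min (δ / 2) (ε / 2)) 1 := by positivity
  obtain ⟨m1, hm1, hb1, hv1⟩ := hR1 (min (min (δ / 2) (ε / 2)) 1) hpos
  refine ⟨m2 ∘ m1, hcomp _ hm1 _ hm2, fun x hx => hb2 _ ((hb1 x hx).trans (by linarith)), ?_⟩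
  have hsub : {x | ‖x‖ ≤ R ∧ ε < ‖(T₂ ∘ T₁) x - (m2 ∘ m1) x‖} ⊆
      {x | ‖x‖ ≤ R ∧ min (min (δ / 2) (ε / 2)) 1 < ‖T₁ x - m1 x‖} ∪
      T₁ ⁻¹' {y | ‖y‖ ≤ R1 + 1 ∧ ε / 2 < ‖T₂ y - m2 y‖} := by
    rintro x ⟨hx, hxe⟩
    by_contra hcon
    simp only [Set.mem_union, Set.mem_ofPred_eq, Set.mem_preimage, not_or, not_and, not_lt] at hcon
    obtain ⟨hc1, hc2⟩ := hcon
    have hc1 := hc1 hx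
    have hm1x := hb1 x hx
    have hT1 : ‖T₁ x‖ ≤ R1 + 1 := by
      calc ‖T₁ x‖ = ‖(T₁ x - m1 x) + m1 x‖ := by simp
        _ ≤ ‖T₁ x - m1 x‖ + ‖m1 x‖ := norm_add_le _ _
        _ ≤ 1 + R1 := add_le_add (hc1.trans (min_le_right _ _)) hm1x
        _ = R1 + 1 := by ring
    have hc2 := hc2 hT1
    have hd : dist (T₁ x) (m1 x) < δ := by
      rw [dist_eq_norm]
      have := hc1.trans ((min_le_left _ _).trans (min_le_left _ _))
      linarith
    have := hδm (T₁ x) (by simpa using hT1) (m1 x) (by simp; linarith) hd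
    rw [dist_eq_norm] at this
    have : ‖(T₂ ∘ T₁) x - (m2 ∘ m1) x‖ ≤ ε := by
      calc ‖(T₂ ∘ T₁) x - (m2 ∘ m1) x‖
          = ‖(T₂ (T₁ x) - m2 (T₁ x)) + (m2 (T₁ x) - m2 (m1 x))‖ := by simp
        _ ≤ _ := norm_add_le _ _
        _ ≤ ε := by linarith
    linarith
  calc _ ≤ _ := measure_mono hsub
    _ ≤ _ := measure_union_le _ _
    _ ≤ ENNReal.ofReal (ε / 2) + ENNReal.ofReal (ε / 2) := by
        gcongr
        · exact hv1.trans (ENNReal.ofReal_le_ofReal ((min_le_left _ _).trans (min_le_right _ _)))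
        · exact (hmp.measure_preimage_le _).trans hv2
    _ = ENNReal.ofReal ε := by
        rw [← ENNReal.ofReal_add (by positivity) (by positivity)]; simp

/-- smooth shears can be uniformly approximated on balls -/
def ShearApprox {D : ℕ} (Ψ : Set ((Fin D → ℝ) → (Fin D → ℝ))) (P : Fin D → Prop) : Prop :=
  ∀ g : (Fin D → ℝ) → (Fin D → ℝ), ContDiff ℝ (⊤ : ℕ∞) g → IsSh P g → ∀ R : ℝ, ∀ ε > 0,
    ∃ m ∈ Ψ, ∀ x, ‖x‖ ≤ R → ‖x + g x - m x‖ ≤ ε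

lemma fract_bad {D : ℕ} {N : ℕ} (hN : 0 < N) (R : ℝ) (ε : ENNReal) (hε : 0 < ε) :
    ∃ η : ℝ, 0 < η ∧ η < 1 / 2 ∧
      volume {x : Fin D → ℝ | ‖x‖ ≤ R ∧ ∃ i, Int.fract ((N : ℝ) * x i) < η ∨
        1 - η < Int.fract ((N : ℝ) * x i)} ≤ ε := by
  let η : ℕ → ℝ := fun n => 1 / ((n : ℝ) + 3)
  let E : ℕ → Set (Fin D → ℝ) := fun n => {x : Fin D → ℝ | ‖x‖ ≤ R ∧
    ∃ i, Int.fract ((N : ℝ) * x i) < η n ∨ 1 - η n < Int.fract ((N : ℝ) * x i)}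
  have hηanti : Antitone η := by
    intro a b hab
    simp only [η]
    gcongr
  have hEm : ∀ n, NullMeasurableSet (E n) volume := by
    intro n
    apply MeasurableSet.nullMeasurableSet
    refine MeasurableSet.inter (measurableSet_le measurable_norm measurable_const) ?_
    have : {x : Fin D → ℝ | ∃ i, Int.fract ((N : ℝ) * x i) < η n ∨
        1 - η n < Int.fract ((N : ℝ) * x i)} = ⋃ i, ({x | Int.fract ((N : ℝ) * x i) < η n} ∪
        {x | 1 - η n < Int.fract ((N : ℝ) * x i)}) := by
      ext x; simp
    change MeasurableSet {x : Fin D → ℝ | ∃ i, Int.fract ((N : ℝ) * x i) < η n ∨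
        1 - η n < Int.fract ((N : ℝ) * x i)}
    rw [this]
    refine MeasurableSet.iUnion fun i => ?_
    have hm : Measurable (fun x : Fin D → ℝ => Int.fract ((N : ℝ) * x i)) :=
      measurable_fract.comp (measurable_const.mul (measurable_pi_apply i))
    exact (measurableSet_lt hm measurable_const).union (measurableSet_lt measurable_const hm)
  have hEa : Antitone E := by
    rintro a b hab x ⟨hx, i, hi⟩
    refine ⟨hx, i, ?_⟩
    have := hηanti hab
    rcases hi with hi | hi
    · left; linarith
    · right; linarith
  have hEf : volume (E 0) ≠ ⊤ := by
    have : E 0 ⊆ Metric.closedBall 0 R := fun x hx => by simpa using hx.1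
    exact ((measure_mono this).trans_lt measure_closedBall_lt_top).ne
  have ht := tendsto_measure_iInter_atTop hEm hEa ⟨0, hEf⟩
  have hz : volume (⋂ n, E n) = 0 := by
    have hsub : (⋂ n, E n) ⊆ ⋃ i : Fin D, ⋃ k : ℤ, {x | x i = (k : ℝ) / N} := by
      intro x hx
      by_contra hcon
      simp only [Set.mem_iUnion, Set.mem_ofPred_eq, not_exists] at hcon
      have hpos : ∀ i, 0 < Int.fract ((N : ℝ) * x i) := by
        intro i
        refine lt_of_le_of_ne (Int.fract_nonneg _) (fun h => ?_)
        have h2 := Int.self_sub_floor ((N : ℝ) * x i)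
        rw [← h] at h2
        apply hcon i ⌊(N : ℝ) * x i⌋
        have hN' : (N : ℝ) ≠ 0 := by positivity
        rw [eq_div_iff hN', mul_comm]
        linarith
      have hex : ∀ i, ∀ᶠ n in Filter.atTop, η n < Int.fract ((N : ℝ) * x i) ∧
          η n < 1 - Int.fract ((N : ℝ) * x i) := by
        intro i
        have hlim : Filter.Tendsto η Filter.atTop (nhds 0) := by
          have := (tendsto_const_div_atTop_nhds_zero_nat (1 : ℝ)).comp (Filter.tendsto_add_atTop_nat 3)
          refine this.congr fun n => ?_
          simp [η]
        exact (hlim.eventually_lt_const (hpos i)).and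
          (hlim.eventually_lt_const (by linarith [Int.fract_lt_one ((N : ℝ) * x i)]))
      obtain ⟨n, hn⟩ := (Filter.eventually_all.2 hex).exists
      have := (Set.mem_iInter.1 hx n).2
      obtain ⟨i, hi⟩ := this
      have h3 := hn i
      rcases hi with hi | hi
      · linarith [h3.1]
      · linarith [h3.2]
    refine measure_mono_null hsub ?_
    simp only [measure_iUnion_null_iff]
    intro i k
    exact Measure.pi_hyperplane (fun _ : Fin D => (volume : Measure ℝ)) i _
  rw [hz] at ht
  obtain ⟨n, hn⟩ := (ht.eventually_le_const hε).exists
  refine ⟨η n, by positivity, ?_, hn⟩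
  simp only [η]
  rw [div_lt_div_iff₀ (by positivity) (by norm_num)]
  have : (0 : ℝ) ≤ n := by positivity
  linarith

lemma approx_shear {D : ℕ} {N : ℕ} (hN : 0 < N) {Ψ : Set ((Fin D → ℝ) → (Fin D → ℝ))}
    (P : Fin D → Prop) (H : ShearApprox Ψ P) (F : (Fin D → ℤ) → (Fin D → ℤ)) (hF : IsSh P F) :
    Approx Ψ (Tm N (fun k => k + F k)) := by
  classical
  intro R
  have hN' : (0 : ℝ) < N := by positivity
  obtain ⟨m0, hm0⟩ := exists_nat_ge ((N : ℝ) * R)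
  let S : Finset (Fin D → ℤ) :=
    Fintype.piFinset (fun i => if P i then {0} else Finset.Icc (-(m0 : ℤ)) m0)
  let v : (Fin D → ℤ) → (Fin D → ℝ) := fun k i => (F k i : ℝ) / N
  refine ⟨R + ∑ k ∈ S, ‖v k‖ + 1, fun ε hε => ?_⟩
  obtain ⟨η, hη0, hη1, hηv⟩ := fract_bad (D := D) hN R (ENNReal.ofReal ε) (by simpa using hε)
  let β : ContDiffBump (1 / 2 : ℝ) := ⟨1 / 2 - η, 1 / 2, by linarith, by linarith⟩
  let w : (Fin D → ℤ) → (Fin D → ℝ) → ℝ := fun k x =>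
    ∏ i, if P i then 1 else β ((N : ℝ) * x i - k i)
  let g : (Fin D → ℝ) → (Fin D → ℝ) := fun x => ∑ k ∈ S, w k x • v k
  have hgs : ContDiff ℝ (⊤ : ℕ∞) g := by
    refine ContDiff.sum fun k _ => ?_
    suffices hwk : ContDiff ℝ (⊤ : ℕ∞) (w k) from hwk.smul contDiff_const
    refine contDiff_prod fun i _ => ?_
    by_cases hi : P i
    · simp only [hi, if_true]; exact contDiff_const
    · simp only [hi, if_false]
      refine β.contDiff.comp ?_
      fun_prop
  have hgsh : IsSh P g := by
    refine ⟨fun x i hi => ?_, fun x y hxy => ?_⟩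
    · simp [g, v, hF.1 _ i hi]
    · refine Finset.sum_congr rfl fun k _ => ?_
      congr 1
      refine Finset.prod_congr rfl fun i _ => ?_
      by_cases hi : P i
      · simp [hi]
      · simp [hi, hxy i hi]
  have hw : ∀ k x, |w k x| ≤ 1 := by
    intro k x
    rw [Finset.abs_prod]
    refine Finset.prod_le_one (fun _ _ => abs_nonneg _) fun i _ => ?_
    by_cases hi : P i
    · simp [hi]
    · simp only [hi, if_false]
      rw [abs_of_nonneg β.nonneg]
      exact β.le_one
  have hgb : ∀ x, ‖g x‖ ≤ ∑ k ∈ S, ‖v k‖ := by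
    intro x
    refine (norm_sum_le _ _).trans (Finset.sum_le_sum fun k _ => ?_)
    rw [norm_smul]
    have := hw k x
    rw [Real.norm_eq_abs]
    nlinarith [norm_nonneg (v k)]
  obtain ⟨m, hm, hmx⟩ := H g hgs hgsh R (min ε 1) (by positivity)
  refine ⟨m, hm, fun x hx => ?_, ?_⟩
  · have h1 := (hmx x hx).trans (min_le_right _ _)
    calc ‖m x‖ = ‖x + g x - (x + g x - m x)‖ := by simp
      _ ≤ ‖x + g x‖ + ‖x + g x - m x‖ := norm_sub_le _ _
      _ ≤ ‖x‖ + ‖g x‖ + ‖x + g x - m x‖ := by gcongr; exact norm_add_le _ _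
      _ ≤ _ := by linarith [hgb x]
  · refine (measure_mono ?_).trans hηv
    rintro x ⟨hx, hxe⟩
    refine ⟨hx, ?_⟩
    by_contra hcon
    push Not at hcon
    have hgx : g x = v (q N x) := by
      let k0 : Fin D → ℤ := fun i => if P i then 0 else q N x i
      have hv0 : v k0 = v (q N x) := by
        have : F k0 = F (q N x) := hF.2 _ _ (fun i hi => by simp [k0, hi])
        simp only [v, this]
      have hk0 : k0 ∈ S := by
        rw [Fintype.mem_piFinset]
        intro i
        by_cases hi : P i
        · simp [hi, k0]
        · simp only [hi, if_false, k0, Finset.mem_Icc]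
          have h1 : |x i| ≤ R := by
            have := norm_le_pi_norm x i
            rw [Real.norm_eq_abs] at this
            linarith
          rw [abs_le] at h1
          constructor
          · refine Int.le_floor.2 ?_
            push_cast
            nlinarith
          · have h2 : (q N x i : ℝ) ≤ (N : ℝ) * x i := Int.floor_le _
            have : (q N x i : ℝ) ≤ (m0 : ℝ) := by nlinarith
            exact_mod_cast this
      have hw0 : w k0 x = 1 := by
        refine Finset.prod_eq_one fun i _ => ?_
        by_cases hi : P i
        · simp [hi]
        · simp only [hi, if_false, k0]
          apply β.one_of_mem_closedBall
          have h3 := hcon i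
          have h4 : (N : ℝ) * x i - (q N x i : ℝ) = Int.fract ((N : ℝ) * x i) :=
            Int.self_sub_floor _
          rw [h4, Metric.mem_closedBall, Real.dist_eq, abs_le]
          change -(1 / 2 - η) ≤ _ ∧ _ ≤ (1 / 2 - η)
          constructor <;> linarith [h3.1, h3.2]
      rw [← hv0]
      have : g x = w k0 x • v k0 := by
        refine Finset.sum_eq_single k0 (fun k hk hne => ?_) (fun h => absurd hk0 h)
        have : ∃ i, ¬ P i ∧ k i ≠ q N x i := by
          by_contra hall
          push Not at hall
          apply hne
          ext i
          by_cases hi : P i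
          · have := (Fintype.mem_piFinset.1 hk) i
            simp only [hi, if_true, Finset.mem_singleton] at this
            simp [k0, hi, this]
          · simp [k0, hi, hall i hi]
        obtain ⟨i, hi, hki⟩ := this
        have : w k x = 0 := by
          refine Finset.prod_eq_zero (Finset.mem_univ i) ?_
          simp only [hi, if_false]
          apply β.zero_of_le_dist
          change (1 / 2 : ℝ) ≤ _
          rw [Real.dist_eq]
          have hl : (q N x i : ℝ) ≤ (N : ℝ) * x i := Int.floor_le _
          have hu : (N : ℝ) * x i < (q N x i : ℝ) + 1 := Int.lt_floor_add_one _
          rcases lt_or_gt_of_ne hki with hlt | hgt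
          · have : (k i : ℝ) + 1 ≤ q N x i := by exact_mod_cast hlt
            rw [le_abs]; left; linarith
          · have : (q N x i : ℝ) + 1 ≤ k i := by exact_mod_cast hgt
            rw [le_abs]; right; linarith
        rw [this, zero_smul]
      rw [this, hw0, one_smul]
    have h5 := (hmx x hx).trans (min_le_left _ _)
    rw [hgx] at h5
    rw [Tm_shear] at hxe
    exact absurd hxe (not_lt.2 h5)

lemma psi_comp {D s : ℕ}
    {NN1 : Set (({i : Fin D // ¬ i.val < s - 1} → ℝ) → ({i : Fin D // i.val < s - 1} → ℝ))}
    {NN2 : Set (({i : Fin D // i.val < s - 1} → ℝ) → ({i : Fin D // ¬ i.val < s - 1} → ℝ))} :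
    ∀ m₁ ∈ Psi D s NN1 NN2, ∀ m₂ ∈ Psi D s NN1 NN2, m₂ ∘ m₁ ∈ Psi D s NN1 NN2 := by
  rintro m₁ ⟨l₁, hne1, hl1, rfl⟩ m₂ ⟨l₂, hne2, hl2, rfl⟩
  refine ⟨l₁ ++ l₂, by simp [hne1], ?_, ?_⟩
  · intro m hm
    rcases List.mem_append.1 hm with h | h
    · exact hl1 m h
    · exact hl2 m h
  · rw [List.foldl_append]
    generalize l₁.foldl (fun h m => m ∘ h) id = a
    have : ∀ (l : List ((Fin D → ℝ) → (Fin D → ℝ))) (b a : (Fin D → ℝ) → (Fin D → ℝ)),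
        (l.foldl (fun h m => m ∘ h) b) ∘ a = l.foldl (fun h m => m ∘ h) (b ∘ a) := by
      intro l
      induction l with
      | nil => intro b a; rfl
      | cons c l ih => intro b a; simp only [List.foldl_cons]; rw [ih]; rfl
    rw [this]; rfl

lemma good_continuous {ι κ : Type} [Fintype ι] [Fintype κ] {F : Set ((ι → ℝ) → (κ → ℝ))}
    (hF : IsGoodFamily F) {f : (ι → ℝ) → (κ → ℝ)} (hf : f ∈ F) : Continuous f := by
  rw [continuous_iff_continuousAt]
  intro x
  obtain ⟨L, hL⟩ := hF.1 f hf (Metric.closedBall x 1) (isCompact_closedBall x 1)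
  exact hL.continuousOn.continuousAt (Metric.closedBall_mem_nhds x one_pos)

lemma psi_continuous {D s : ℕ}
    {NN1 : Set (({i : Fin D // ¬ i.val < s - 1} → ℝ) → ({i : Fin D // i.val < s - 1} → ℝ))}
    {NN2 : Set (({i : Fin D // i.val < s - 1} → ℝ) → ({i : Fin D // ¬ i.val < s - 1} → ℝ))}
    (hNN1 : IsGoodFamily NN1) (hNN2 : IsGoodFamily NN2) :
    ∀ m ∈ Psi D s NN1 NN2, Continuous m := by
  rintro m ⟨l, -, hl, rfl⟩
  have : ∀ (l : List ((Fin D → ℝ) → (Fin D → ℝ))) (b : (Fin D → ℝ) → (Fin D → ℝ)),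
      (∀ m ∈ l, Continuous m) → Continuous b →
      Continuous (l.foldl (fun h m => m ∘ h) b) := by
    intro l
    induction l with
    | nil => intro b _ hb; exact hb
    | cons c l ih =>
      intro b h hb
      exact ih _ (fun m hm => h m (List.mem_cons_of_mem _ hm)) ((h c List.mem_cons_self).comp hb)
  refine this l id (fun m hm => ?_) continuous_id
  rcases hl m hm with ⟨f, hf, rfl⟩ | ⟨f, hf, rfl⟩
  · have hc := good_continuous hNN1 hf
    refine continuous_pi fun i => ?_
    by_cases h : i.val < s - 1
    · simp only [upModule, h, dif_pos]
      fun_prop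
    · simp only [upModule, h, dif_neg, not_false_eq_true]
      fun_prop
  · have hc := good_continuous hNN2 hf
    refine continuous_pi fun i => ?_
    by_cases h : i.val < s - 1
    · simp only [lowModule, h, dif_pos]
      fun_prop
    · simp only [lowModule, h, dif_neg, not_false_eq_true]
      fun_prop

lemma shearApprox_up {D s : ℕ}
    {NN1 : Set (({i : Fin D // ¬ i.val < s - 1} → ℝ) → ({i : Fin D // i.val < s - 1} → ℝ))}
    {NN2 : Set (({i : Fin D // i.val < s - 1} → ℝ) → ({i : Fin D // ¬ i.val < s - 1} → ℝ))}
    (hNN1 : IsGoodFamily NN1) :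
    ShearApprox (Psi D s NN1 NN2) (fun i => i.val < s - 1) := by
  intro g hg hsh R ε hε
  let ext : ({i : Fin D // ¬ i.val < s - 1} → ℝ) → (Fin D → ℝ) :=
    fun b i => if h : i.val < s - 1 then 0 else b ⟨i, h⟩
  have hext : ContDiff ℝ (⊤ : ℕ∞) ext := by
    rw [contDiff_pi]
    intro i
    by_cases h : i.val < s - 1
    · simp only [ext, h, dif_pos]; exact contDiff_const
    · simp only [ext, h, dif_neg, not_false_eq_true]; fun_prop
  obtain ⟨f, hf, hfx⟩ := hNN1.2 (Metric.closedBall 0 R) (isCompact_closedBall _ _)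
    (fun b i => g (ext b) i.1) (by
      rw [contDiff_pi]
      intro i
      exact (contDiff_apply ℝ ℝ i.1).comp (hg.comp hext)) ε hε
  refine ⟨upModule D s f, ⟨[upModule D s f], by simp, ?_, rfl⟩, ?_⟩
  · intro m hm
    rw [List.mem_singleton] at hm
    exact Or.inl ⟨f, hf, hm⟩
  · intro x hx
    have hb : (fun j : {i : Fin D // ¬ i.val < s - 1} => x j.1) ∈ Metric.closedBall
        (0 : {i : Fin D // ¬ i.val < s - 1} → ℝ) R := by
      rw [mem_closedBall_zero_iff, pi_norm_le_iff_of_nonneg ((norm_nonneg x).trans hx)]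
      exact fun j => (norm_le_pi_norm x j.1).trans hx
    have h1 := hfx _ hb
    rw [pi_norm_le_iff_of_nonneg hε.le] at h1 ⊢
    intro i
    by_cases h : i.val < s - 1
    · have h2 := h1 ⟨i, h⟩
      have h3 : g (ext fun j => x j.1) = g x := hsh.2 _ _ (fun j hj => by simp [ext, hj])
      simp only [Pi.sub_apply, Pi.add_apply, h3] at h2 ⊢
      simp only [upModule, h, dif_pos]
      rw [add_sub_add_left_eq_sub]
      exact h2
    · simp [upModule, h, hsh.1 x i h, hε.le]

lemma shearApprox_low {D s : ℕ}
    {NN1 : Set (({i : Fin D // ¬ i.val < s - 1} → ℝ) → ({i : Fin D // i.val < s - 1} → ℝ))}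
    {NN2 : Set (({i : Fin D // i.val < s - 1} → ℝ) → ({i : Fin D // ¬ i.val < s - 1} → ℝ))}
    (hNN2 : IsGoodFamily NN2) :
    ShearApprox (Psi D s NN1 NN2) (fun i => ¬ i.val < s - 1) := by
  intro g hg hsh R ε hε
  let ext : ({i : Fin D // i.val < s - 1} → ℝ) → (Fin D → ℝ) :=
    fun b i => if h : i.val < s - 1 then b ⟨i, h⟩ else 0
  have hext : ContDiff ℝ (⊤ : ℕ∞) ext := by
    rw [contDiff_pi]
    intro i
    by_cases h : i.val < s - 1
    · simp only [ext, h, dif_pos]; fun_prop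
    · simp only [ext, h, dif_neg, not_false_eq_true]; exact contDiff_const
  obtain ⟨f, hf, hfx⟩ := hNN2.2 (Metric.closedBall 0 R) (isCompact_closedBall _ _)
    (fun b i => g (ext b) i.1) (by
      rw [contDiff_pi]
      intro i
      exact (contDiff_apply ℝ ℝ i.1).comp (hg.comp hext)) ε hε
  refine ⟨lowModule D s f, ⟨[lowModule D s f], by simp, ?_, rfl⟩, ?_⟩
  · intro m hm
    rw [List.mem_singleton] at hm
    exact Or.inr ⟨f, hf, hm⟩
  · intro x hx
    have hb : (fun j : {i : Fin D // i.val < s - 1} => x j.1) ∈ Metric.closedBall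
        (0 : {i : Fin D // i.val < s - 1} → ℝ) R := by
      rw [mem_closedBall_zero_iff, pi_norm_le_iff_of_nonneg ((norm_nonneg x).trans hx)]
      exact fun j => (norm_le_pi_norm x j.1).trans hx
    have h1 := hfx _ hb
    rw [pi_norm_le_iff_of_nonneg hε.le] at h1 ⊢
    intro i
    by_cases h : i.val < s - 1
    · have h3 : g x i = 0 := hsh.1 x i (not_not.2 h)
      simp [lowModule, h, h3, hε.le]
    · have h2 := h1 ⟨i, h⟩
      have h3 : g (ext fun j => x j.1) = g x :=
        hsh.2 _ _ (fun j hj => by simp [ext, not_not.1 hj])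
      simp only [Pi.sub_apply, Pi.add_apply, h3] at h2 ⊢
      simp only [lowModule, h, dif_neg, not_false_eq_true]
      rw [add_sub_add_left_eq_sub]
      exact h2

lemma dist_of_q_eq {D N : ℕ} (hN : 0 < N) {x y : Fin D → ℝ} (h : q N x = q N y) :
    ‖x - y‖ ≤ 1 / (N : ℝ) := by
  have hN' : (0 : ℝ) < N := by positivity
  rw [pi_norm_le_iff_of_nonneg (by positivity)]
  intro i
  have h1 : (q N x i : ℝ) ≤ N * x i := Int.floor_le _
  have h2 : N * x i < (q N x i : ℝ) + 1 := Int.lt_floor_add_one _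
  have h3 : (q N y i : ℝ) ≤ N * y i := Int.floor_le _
  have h4 : N * y i < (q N y i : ℝ) + 1 := Int.lt_floor_add_one _
  rw [h] at h1 h2
  rw [Pi.sub_apply, Real.norm_eq_abs, le_div_iff₀ hN', ← abs_of_pos hN', ← abs_mul, abs_le]
  constructor <;> nlinarith

lemma volume_cell {D N : ℕ} (hN : 0 < N) (k : Fin D → ℤ) :
    volume (q N ⁻¹' {k}) = ENNReal.ofReal ((1 / (N : ℝ)) ^ D) := by
  have hN' : (0 : ℝ) < N := by positivity
  have : q N ⁻¹' {k} = Set.univ.pi fun i => Set.Ico ((k i : ℝ) / N) (((k i : ℝ) + 1) / N) := by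
    ext x
    simp only [Set.mem_preimage, Set.mem_singleton_iff, Set.mem_pi, Set.mem_univ, forall_const,
      Set.mem_Ico, div_le_iff₀ hN', lt_div_iff₀ hN']
    rw [funext_iff]
    refine forall_congr' fun i => ?_
    simp only [q]
    rw [Int.floor_eq_iff, mul_comm]
  rw [this, Real.volume_pi_Ico]
  have h2 : ∀ i, ((k i : ℝ) + 1) / N - (k i : ℝ) / N = 1 / N := fun i => by ring
  simp only [h2]
  simp only [Finset.prod_const, Finset.card_univ, Fintype.card_fin]
  rw [ENNReal.ofReal_pow (by positivity)]

lemma volume_cells {D N : ℕ} (hN : 0 < N) (S : Finset (Fin D → ℤ)) :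
    volume (q N ⁻¹' (S : Set (Fin D → ℤ))) = ENNReal.ofReal (S.card * (1 / (N : ℝ)) ^ D) := by
  rw [← sum_measure_preimage_singleton S
    (fun k _ => (measurable_q N) (measurableSet_singleton k))]
  simp only [volume_cell hN, Finset.sum_const, nsmul_eq_mul]
  rw [ENNReal.ofReal_mul (by positivity)]
  simp

lemma q_box {D N ρ : ℕ} {x : Fin D → ℝ} (hx : ‖x‖ ≤ ρ) (i : Fin D) :
    -((N * ρ : ℕ) : ℤ) ≤ q N x i ∧ q N x i ≤ ((N * ρ : ℕ) : ℤ) := by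
  have h1 : |x i| ≤ ρ := by
    have := norm_le_pi_norm x i
    rw [Real.norm_eq_abs] at this
    linarith
  rw [abs_le] at h1
  have hN : (0 : ℝ) ≤ N := by positivity
  constructor
  · refine Int.le_floor.2 ?_
    push_cast
    nlinarith
  · have h2 : (q N x i : ℝ) ≤ (N : ℝ) * x i := Int.floor_le _
    have : (q N x i : ℝ) ≤ ((N * ρ : ℕ) : ℝ) := by push_cast; nlinarith
    exact_mod_cast this

lemma q_coarse {D M L : ℕ} (hL : 0 < L) {x : Fin D → ℝ} {j : Fin D → ℤ}
    (h : ∀ i, (L : ℤ) * j i ≤ q (M * L) x i ∧ q (M * L) x i < L * j i + L) : q M x = j := by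
  ext i
  have hL' : (0 : ℝ) < L := by positivity
  have h1 : (q (M * L) x i : ℝ) ≤ (M * L : ℕ) * x i := Int.floor_le _
  have h2 : (M * L : ℕ) * x i < (q (M * L) x i : ℝ) + 1 := Int.lt_floor_add_one _
  have h3 : (L : ℝ) * j i ≤ q (M * L) x i := by exact_mod_cast (h i).1
  have h4 : (q (M * L) x i : ℝ) + 1 ≤ L * j i + L := by exact_mod_cast (h i).2
  push_cast at h1 h2
  change ⌊(M : ℝ) * x i⌋ = _
  rw [Int.floor_eq_iff]
  constructor <;> nlinarith

lemma norm_of_q {D M ρ : ℕ} (hM : 0 < M) {x : Fin D → ℝ}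
    (h : ∀ i, -((M * ρ : ℕ) : ℤ) ≤ q M x i ∧ q M x i ≤ ((M * ρ : ℕ) : ℤ)) : ‖x‖ ≤ ρ + 1 := by
  have hM' : (1 : ℝ) ≤ M := by exact_mod_cast hM
  rw [pi_norm_le_iff_of_nonneg (by positivity)]
  intro i
  have h1 : (q M x i : ℝ) ≤ M * x i := Int.floor_le _
  have h2 : M * x i < (q M x i : ℝ) + 1 := Int.lt_floor_add_one _
  have h3 : -((M : ℝ) * ρ) ≤ q M x i := by exact_mod_cast (h i).1
  have h4 : (q M x i : ℝ) ≤ M * ρ := by exact_mod_cast (h i).2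
  rw [Real.norm_eq_abs, abs_le]
  have hρ : (0 : ℝ) ≤ ρ := by positivity
  constructor
  · by_contra hc
    push Not at hc
    nlinarith
  · by_contra hc
    push Not at hc
    nlinarith

lemma exists_inj {α : Type} [DecidableEq α] [Nonempty α] (A B : Finset α) (h : A.card ≤ B.card) :
    ∃ f : α → α, Set.InjOn f A ∧ ∀ a ∈ A, f a ∈ B := by
  obtain ⟨B', hB', hc⟩ := Finset.exists_subset_card_eq h
  let e := Finset.equivOfCardEq hc.symm
  classical
  refine ⟨fun a => if ha : a ∈ A then (e ⟨a, ha⟩ : α) else a, ?_, ?_⟩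
  · intro a ha b hb hab
    have ha' : a ∈ A := ha
    have hb' : b ∈ A := hb
    simp only [ha', hb', dif_pos] at hab
    have := e.injective (Subtype.ext hab)
    simpa using this
  · intro a ha
    simp only [ha, dif_pos]
    exact hB' (e ⟨a, ha⟩).2

lemma choose_L {D M : ℕ} (hM : 0 < M) (J : Finset (Fin D → ℤ)) (K : (Fin D → ℤ) → Set (Fin D → ℝ))
    (hK : ∀ j, IsCompact (K j)) (hdis : ∀ i j, i ≠ j → Disjoint (K i) (K j)) (η : ENNReal)
    (hη : 0 < η) :
    ∃ L : ℕ, 0 < L ∧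
      (∀ j ∈ J, volume (Metric.cthickening (1 / ((M * L : ℕ) : ℝ)) (K j)) ≤ volume (K j) + η) ∧
      (∀ i ∈ J, ∀ j ∈ J, i ≠ j → Disjoint (Metric.cthickening (1 / ((M * L : ℕ) : ℝ)) (K i))
        (Metric.cthickening (1 / ((M * L : ℕ) : ℝ)) (K j))) := by
  have hM' : (0 : ℝ) < M := by positivity
  have hlim : Filter.Tendsto (fun L : ℕ => 1 / ((M * L : ℕ) : ℝ)) Filter.atTop (nhds 0) := by
    have h1 := (tendsto_const_div_atTop_nhds_zero_nat (1 / (M : ℝ)))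
    refine h1.congr fun n => ?_
    push_cast
    rw [div_div]
  have e1 : ∀ᶠ r : ℝ in nhds 0, ∀ j ∈ J, volume (Metric.cthickening r (K j)) ≤ volume (K j) + η := by
    rw [Filter.eventually_all_finset]
    intro j _
    have h1 := tendsto_measure_cthickening_of_isCompact (μ := volume) (hK j)
    refine h1.eventually_le_const ?_
    exact ENNReal.lt_add_right (hK j).measure_lt_top.ne hη.ne'
  have e2 : ∀ᶠ r : ℝ in nhds 0, ∀ i ∈ J, ∀ j ∈ J, i ≠ j →
      Disjoint (Metric.cthickening r (K i)) (Metric.cthickening r (K j)) := by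
    rw [Filter.eventually_all_finset]
    intro i _
    rw [Filter.eventually_all_finset]
    intro j _
    by_cases hij : i = j
    · exact Filter.Eventually.of_forall fun r h => absurd hij h
    · obtain ⟨δ, hδ, hd⟩ := (hdis i j hij).exists_cthickenings (hK i) (hK j).isClosed
      filter_upwards [Iio_mem_nhds hδ] with r hr _
      have hr' : r ≤ δ := le_of_lt hr
      exact hd.mono (Metric.cthickening_mono hr' _) (Metric.cthickening_mono hr' _)
  obtain ⟨L, ⟨h1, h2⟩, h3⟩ := (((hlim.eventually e1).and (hlim.eventually e2)).and
    (Filter.eventually_gt_atTop 0)).exists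
  exact ⟨L, h3, h1, h2⟩

lemma discard {D M L : ℕ} (hM : 0 < M) (hL : 0 < L) (K : Set (Fin D → ℝ)) (C C' : Finset (Fin D → ℤ))
    (η : ℝ) (hη : 0 < η)
    (hCK : ∀ k ∈ C, ∃ x ∈ K, q (M * L) x = k) (hC' : C' ⊆ C) (hcard : C'.card = min C.card (L ^ D))
    (hvK : volume K ≤ ENNReal.ofReal ((1 / (M : ℝ)) ^ D))
    (hth : volume (Metric.cthickening (1 / ((M * L : ℕ) : ℝ)) K) ≤ volume K + ENNReal.ofReal η) :
    volume (q (M * L) ⁻¹' ((C \ C' : Finset (Fin D → ℤ)) : Set (Fin D → ℤ))) ≤ ENNReal.ofReal η := by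
  have hN : 0 < M * L := Nat.mul_pos hM hL
  rw [volume_cells hN]
  apply ENNReal.ofReal_le_ofReal
  have hcs := Finset.card_sdiff_of_subset hC'
  rw [hcs, hcard]
  by_cases hle : C.card ≤ L ^ D
  · rw [min_eq_left hle]; simp [hη.le]
  · push Not at hle
    rw [min_eq_right hle.le, Nat.cast_sub hle.le]
    have h1 : volume (q (M * L) ⁻¹' (C : Set (Fin D → ℤ))) ≤
        ENNReal.ofReal ((1 / (M : ℝ)) ^ D + η) := by
      rw [ENNReal.ofReal_add (by positivity) hη.le]
      refine le_trans (measure_mono ?_) (hth.trans (by gcongr))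
      intro x hx
      obtain ⟨y, hy, hyk⟩ := hCK (q (M * L) x) hx
      refine Metric.mem_cthickening_of_dist_le x y _ _ hy ?_
      rw [dist_eq_norm]
      exact dist_of_q_eq hN hyk.symm
    rw [volume_cells hN, ENNReal.ofReal_le_ofReal_iff (by positivity)] at h1
    have hL' : (L : ℝ) ≠ 0 := by positivity
    have hM' : (M : ℝ) ≠ 0 := by positivity
    have h2 : (1 / (M : ℝ)) ^ D = (L : ℝ) ^ D * (1 / ((M * L : ℕ) : ℝ)) ^ D := by
      rw [← mul_pow]
      congr 1
      push_cast
      field_simp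
    rw [sub_mul]
    push_cast at h1 h2 ⊢
    linarith

lemma exists_grid {D : ℕ} (hD : 0 < D)
    (U : Set (Fin D → ℝ)) (hU : IsCompact U)
    (ψ : (Fin D → ℝ) → (Fin D → ℝ)) (hψm : Measurable ψ)
    (hbd : Bornology.IsBounded (ψ '' U))
    (himg : MeasurableSet (ψ '' U))
    (hmp : ∀ B ⊆ ψ '' U, MeasurableSet B → volume (U ∩ ψ ⁻¹' B) = volume B) :
    ∃ W : ℝ, (∀ x ∈ U, ‖x‖ ≤ W) ∧ (∀ x ∈ U, ‖ψ x‖ ≤ W) ∧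
      ∀ ε > 0, ∃ N : ℕ, 0 < N ∧ ∃ (C : Finset (Fin D → ℤ)) (σ : (Fin D → ℤ) → (Fin D → ℤ)),
      Set.InjOn σ C ∧ ∀ τ : (Fin D → ℤ) → (Fin D → ℤ), (∀ k ∈ C, τ k = σ k) →
        (∀ x ∈ U, ‖Tm N τ x‖ ≤ W) ∧
        volume {x | x ∈ U ∧ ε < ‖Tm N τ x - ψ x‖} ≤ ENNReal.ofReal ε := by
  classical
  obtain ⟨r1, hr1⟩ := hU.isBounded.exists_norm_le
  obtain ⟨r2, hr2⟩ := hbd.exists_norm_le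
  obtain ⟨ρ, hρ⟩ := exists_nat_ge (max r1 r2)
  have hUρ : ∀ x ∈ U, ‖x‖ ≤ ρ := fun x hx => (hr1 x hx).trans ((le_max_left _ _).trans hρ)
  have hψρ : ∀ x ∈ U, ‖ψ x‖ ≤ ρ := fun x hx =>
    (hr2 _ (Set.mem_image_of_mem ψ hx)).trans ((le_max_right _ _).trans hρ)
  have hρ0 : (0 : ℝ) ≤ ρ := by positivity
  refine ⟨3 * ρ + 2, fun x hx => (hUρ x hx).trans (by linarith),
    fun x hx => (hψρ x hx).trans (by linarith), fun ε hε => ?_⟩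
  obtain ⟨M, hM, hMε⟩ : ∃ M : ℕ, 0 < M ∧ 1 / (M : ℝ) ≤ ε := by
    obtain ⟨n, hn⟩ := exists_nat_one_div_lt hε
    exact ⟨n + 1, Nat.succ_pos n, by push_cast; exact hn.le⟩
  let box : ℕ → Finset (Fin D → ℤ) := fun N =>
    Fintype.piFinset fun _ => Finset.Icc (-((N * ρ : ℕ) : ℤ)) ((N * ρ : ℕ) : ℤ)
  have hbox : ∀ N x, ‖x‖ ≤ ρ → q N x ∈ box N := fun N x hx => by
    rw [Fintype.mem_piFinset]
    intro i
    rw [Finset.mem_Icc]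
    exact q_box hx i
  let J := box M
  let A : (Fin D → ℤ) → Set (Fin D → ℝ) := fun j => U ∩ (fun x => q M (ψ x)) ⁻¹' {j}
  have hAm : ∀ j, MeasurableSet (A j) := fun j =>
    hU.measurableSet.inter (((measurable_q M).comp hψm) (measurableSet_singleton j))
  have hAv : ∀ j, volume (A j) ≤ ENNReal.ofReal ((1 / (M : ℝ)) ^ D) := by
    intro j
    have h1 := hmp (ψ '' U ∩ q M ⁻¹' {j}) Set.inter_subset_left
      (himg.inter ((measurable_q M) (measurableSet_singleton j)))
    have h2 : U ∩ ψ ⁻¹' (ψ '' U ∩ q M ⁻¹' {j}) = A j := by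
      ext x
      constructor
      · rintro ⟨hx, -, h⟩
        exact ⟨hx, h⟩
      · rintro ⟨hx, h⟩
        exact ⟨hx, Set.mem_image_of_mem ψ hx, h⟩
    rw [h2] at h1
    rw [h1, ← volume_cell hM j]
    exact measure_mono Set.inter_subset_right
  have hη : 0 < ε / (2 * (J.card + 1)) := by positivity
  set η : ℝ := ε / (2 * (J.card + 1)) with hηdef
  have hex : ∀ j, ∃ K ⊆ A j, IsCompact K ∧ volume (A j \ K) < ENNReal.ofReal η := fun j =>
    (hAm j).exists_isCompact_sdiff_lt ((hAv j).trans_lt ENNReal.ofReal_lt_top).ne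
      (by simpa using hη)
  choose K hKA hKc hKv using hex
  have hKdis : ∀ i j, i ≠ j → Disjoint (K i) (K j) := by
    intro i j hij
    rw [Set.disjoint_left]
    intro x hxi hxj
    have h1 : q M (ψ x) = i := (hKA i hxi).2
    have h2 : q M (ψ x) = j := (hKA j hxj).2
    exact hij (h1.symm.trans h2)
  obtain ⟨L, hL, hLv, hLd⟩ := choose_L hM J K hKc hKdis (ENNReal.ofReal η) (by simpa using hη)
  set N := M * L with hNdef
  have hN : 0 < N := Nat.mul_pos hM hL
  have hN' : (N : ℝ) ≠ 0 := by positivity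
  let C : (Fin D → ℤ) → Finset (Fin D → ℤ) := fun j => (box N).filter fun k => ∃ x ∈ K j, q N x = k
  have hCdis : ∀ i ∈ J, ∀ j ∈ J, i ≠ j → Disjoint (C i) (C j) := by
    intro i hi j hj hij
    rw [Finset.disjoint_left]
    intro k hki hkj
    obtain ⟨x, hx, hxk⟩ := (Finset.mem_filter.1 hki).2
    obtain ⟨y, hy, hyk⟩ := (Finset.mem_filter.1 hkj).2
    have hd := Set.disjoint_left.1 (hLd i hi j hj hij)
    refine @hd x ?_ ?_
    · exact Metric.self_subset_cthickening _ hx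
    · refine Metric.mem_cthickening_of_dist_le x y _ _ hy ?_
      rw [dist_eq_norm]
      exact dist_of_q_eq hN (hxk.trans hyk.symm)
  have hC'ex : ∀ j, ∃ C' ⊆ C j, C'.card = min (C j).card (L ^ D) := fun j =>
    Finset.exists_subset_card_eq (min_le_left _ _)
  choose C' hC'C hC'card using hC'ex
  let Fs : (Fin D → ℤ) → Finset (Fin D → ℤ) := fun j =>
    Fintype.piFinset fun i => Finset.Ico ((L : ℤ) * j i) (L * j i + L)
  have hFs : ∀ j, (Fs j).card = L ^ D := by
    intro j
    simp [Fs, Fintype.card_piFinset]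
  have hσex : ∀ j, ∃ f : (Fin D → ℤ) → (Fin D → ℤ), Set.InjOn f (C' j) ∧ ∀ a ∈ C' j, f a ∈ Fs j :=
    fun j => exists_inj (C' j) (Fs j) (by rw [hFs, hC'card]; exact min_le_right _ _)
  choose f hfinj hfmem using hσex
  let sh : ℤ := N * (2 * ρ + 2)
  let σ : (Fin D → ℤ) → (Fin D → ℤ) := fun k =>
    if h : ∃ j, j ∈ J ∧ k ∈ C' j then f h.choose k else fun i => k i + sh
  have hσ1 : ∀ j ∈ J, ∀ k ∈ C' j, σ k = f j k := by
    intro j hj k hk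
    have h : ∃ j, j ∈ J ∧ k ∈ C' j := ⟨j, hj, hk⟩
    have h2 : h.choose = j := by
      by_contra hne
      exact Finset.disjoint_left.1 (hCdis _ h.choose_spec.1 j hj hne)
        (hC'C _ h.choose_spec.2) (hC'C _ hk)
    simp only [σ, dif_pos h, h2]
  have hσ2 : ∀ k, (¬ ∃ j, j ∈ J ∧ k ∈ C' j) → σ k = fun i => k i + sh := by
    intro k h
    simp only [σ, dif_neg h]
  have hJb : ∀ j ∈ J, ∀ i, -((M * ρ : ℕ) : ℤ) ≤ j i ∧ j i ≤ ((M * ρ : ℕ) : ℤ) := fun j hj i =>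
    Finset.mem_Icc.1 (Fintype.mem_piFinset.1 hj i)
  have hmix : ∀ j ∈ J, ∀ k ∈ C' j, ∀ k' ∈ box N, σ k ≠ fun i => k' i + sh := by
    intro j hj k hk k' hk' heq
    rw [hσ1 j hj k hk] at heq
    let i0 : Fin D := ⟨0, hD⟩
    have h1 := Finset.mem_Ico.1 (Fintype.mem_piFinset.1 (hfmem j k hk) i0)
    have h2 := Finset.mem_Icc.1 (Fintype.mem_piFinset.1 hk' i0)
    have h3 := hJb j hj i0
    have h4 := congrFun heq i0
    simp only [sh] at h4
    rw [h4] at h1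
    have h5 : (L : ℤ) * j i0 ≤ L * ((M * ρ : ℕ) : ℤ) :=
      mul_le_mul_of_nonneg_left h3.2 (by positivity)
    have h6 : (L : ℤ) ≤ M * L := by
      have : (1 : ℤ) ≤ M := by exact_mod_cast hM
      nlinarith [Int.natCast_nonneg L]
    have h7 : (0 : ℤ) < M * L := by exact_mod_cast hN
    have h8 := h1.2
    have h9 := h2.1
    rw [hNdef] at h8 h9
    push_cast at h5 h8 h9
    nlinarith
  refine ⟨N, hN, box N, σ, ?_, ?_⟩
  · intro k hk k' hk' heq
    by_cases h : ∃ j, j ∈ J ∧ k ∈ C' j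
    · obtain ⟨j, hj, hkj⟩ := h
      by_cases h' : ∃ j, j ∈ J ∧ k' ∈ C' j
      · obtain ⟨j', hj', hkj'⟩ := h'
        rw [hσ1 j hj k hkj, hσ1 j' hj' k' hkj'] at heq
        have hjj : j = j' := by
          ext i
          have h1 := Finset.mem_Ico.1 (Fintype.mem_piFinset.1 (hfmem j k hkj) i)
          have h2 := Finset.mem_Ico.1 (Fintype.mem_piFinset.1 (hfmem j' k' hkj') i)
          rw [heq] at h1
          have hL1 : (0 : ℤ) < L := by exact_mod_cast hL
          have h3 : (L : ℤ) * j i < L * (j' i + 1) := by linarith [h1.1, h2.2]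
          have h4 : (L : ℤ) * j' i < L * (j i + 1) := by linarith [h2.1, h1.2]
          have h5 := lt_of_mul_lt_mul_left h3 hL1.le
          have h6 := lt_of_mul_lt_mul_left h4 hL1.le
          omega
        subst hjj
        exact hfinj j hkj hkj' heq
      · rw [hσ2 k' h'] at heq
        exact absurd heq (hmix j hj k hkj k' hk')
    · by_cases h' : ∃ j, j ∈ J ∧ k' ∈ C' j
      · obtain ⟨j', hj', hkj'⟩ := h'
        rw [hσ2 k h] at heq
        exact absurd heq.symm (hmix j' hj' k' hkj' k hk)
      · rw [hσ2 k h, hσ2 k' h'] at heq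
        ext i
        have := congrFun heq i
        simpa using this
  · intro τ hτ
    have hcell : ∀ x ∈ U, ∀ j ∈ J, q N x ∈ C' j → q M (Tm N τ x) = j := by
      intro x hx j hj hk
      apply q_coarse hL
      intro i
      have h1 : q (M * L) (Tm N τ x) = f j (q N x) := by
        rw [← hNdef, q_Tm hN, hτ _ (hbox N x (hUρ x hx)), hσ1 j hj _ hk]
      rw [h1]
      exact Finset.mem_Ico.1 (Fintype.mem_piFinset.1 (hfmem j _ hk) i)
    constructor
    · intro x hx
      by_cases h : ∃ j, j ∈ J ∧ q N x ∈ C' j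
      · obtain ⟨j, hj, hk⟩ := h
        have h1 := hcell x hx j hj hk
        have h2 : ‖Tm N τ x‖ ≤ ρ + 1 := norm_of_q hM (by rw [h1]; exact hJb j hj)
        linarith
      · have h1 : Tm N τ x = x + fun _ => (2 * (ρ : ℝ) + 2) := by
          funext i
          simp only [Tm, Pi.add_apply]
          rw [hτ _ (hbox N x (hUρ x hx)), hσ2 _ h]
          simp only [sh]
          push_cast
          field_simp
          ring
        rw [h1]
        refine (norm_add_le _ _).trans ?_
        have h2 : ‖(fun _ => (2 * (ρ : ℝ) + 2) : Fin D → ℝ)‖ ≤ 2 * ρ + 2 := by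
          rw [pi_norm_le_iff_of_nonneg (by positivity)]
          intro i
          rw [Real.norm_eq_abs, abs_of_nonneg (by positivity)]
        linarith [hUρ x hx]
    · have hsub : {x | x ∈ U ∧ ε < ‖Tm N τ x - ψ x‖} ⊆
          (⋃ j ∈ J, A j \ K j) ∪
          (⋃ j ∈ J, q N ⁻¹' ((C j \ C' j : Finset (Fin D → ℤ)) : Set (Fin D → ℤ))) := by
        rintro x ⟨hx, hxe⟩
        have hjJ : q M (ψ x) ∈ J := hbox M _ (hψρ x hx)
        by_contra hcon
        simp only [Set.mem_union, Set.mem_iUnion, not_or, not_exists] at hcon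
        have h1 := hcon.1 _ hjJ
        have h2 := hcon.2 _ hjJ
        have hxA : x ∈ A (q M (ψ x)) := ⟨hx, rfl⟩
        have hxK : x ∈ K (q M (ψ x)) := by
          by_contra hn
          exact h1 ⟨hxA, hn⟩
        have hxC : q N x ∈ C (q M (ψ x)) :=
          Finset.mem_filter.2 ⟨hbox N x (hUρ x hx), x, hxK, rfl⟩
        have hxC' : q N x ∈ C' (q M (ψ x)) := by
          by_contra hn
          apply h2
          simp only [Set.mem_preimage, Finset.mem_coe, Finset.mem_sdiff]
          exact ⟨hxC, hn⟩
        have h3 := hcell x hx _ hjJ hxC'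
        have h4 := dist_of_q_eq hM h3
        linarith
      have hb1 : volume (⋃ j ∈ J, A j \ K j) ≤ J.card * ENNReal.ofReal η := by
        refine (measure_biUnion_finset_le J _).trans ?_
        refine (Finset.sum_le_sum fun j _ => (hKv j).le).trans ?_
        simp
      have hb2 : volume (⋃ j ∈ J, q N ⁻¹' ((C j \ C' j : Finset (Fin D → ℤ)) : Set (Fin D → ℤ)))
          ≤ J.card * ENNReal.ofReal η := by
        refine (measure_biUnion_finset_le J _).trans ?_
        refine (Finset.sum_le_sum (g := fun _ => ENNReal.ofReal η) fun j hj => ?_).trans ?_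
        · exact discard hM hL (K j) (C j) (C' j) η hη (fun k hk => (Finset.mem_filter.1 hk).2)
            (hC'C j) (hC'card j) ((measure_mono (hKA j)).trans (hAv j)) (hLv j hj)
        · simp
      refine (measure_mono hsub).trans ((measure_union_le _ _).trans ((add_le_add hb1 hb2).trans ?_))
      have hcast : (J.card : ENNReal) = ENNReal.ofReal (J.card : ℝ) := by simp
      rw [hcast, ← ENNReal.ofReal_mul (by positivity), ← ENNReal.ofReal_add (by positivity)
        (by positivity)]
      apply ENNReal.ofReal_le_ofReal
      rw [hηdef]
      have h0 : (0 : ℝ) ≤ J.card := by positivity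
      have : (J.card : ℝ) * (ε / (2 * (J.card + 1))) + J.card * (ε / (2 * (J.card + 1)))
          = ε * (J.card / (J.card + 1)) := by field_simp; ring
      rw [this]
      have h1 : (J.card : ℝ) / (J.card + 1) ≤ 1 := by
        rw [div_le_one (by positivity)]; linarith
      nlinarith

lemma good_main {D s : ℕ} (hs2 : 2 ≤ s) (hsD : s ≤ D)
    {NN1 : Set (({i : Fin D // ¬ i.val < s - 1} → ℝ) → ({i : Fin D // i.val < s - 1} → ℝ))}
    {NN2 : Set (({i : Fin D // i.val < s - 1} → ℝ) → ({i : Fin D // ¬ i.val < s - 1} → ℝ))}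
    (hNN1 : IsGoodFamily NN1) (hNN2 : IsGoodFamily NN2) {N : ℕ} (hN : 0 < N)
    (C : Finset (Fin D → ℤ)) (σ : (Fin D → ℤ) → (Fin D → ℤ)) (hσ : Set.InjOn σ C) :
    ∃ τ, Approx (Psi D s NN1 NN2) (Tm N τ) ∧ ∀ k ∈ C, τ k = σ k := by
  let Good : ((Fin D → ℤ) → (Fin D → ℤ)) → Prop := fun τ =>
    Approx (Psi D s NN1 NN2) (Tm N τ) ∧ MeasurePreserving (Tm N τ) volume volume
  obtain ⟨τ, hτ, hτc⟩ := exists_perm (ι := {k // k ∈ C}) (fun i : Fin D => i.val < s - 1)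
    ⟨0, by omega⟩ ⟨D - 1, by omega⟩ (by simp; omega) (by simp; omega) Good
    (fun τ₁ τ₂ h1 h2 => by
      refine ⟨?_, ?_⟩
      · rw [Tm_comp hN]
        exact Approx.comp (psi_continuous hNN1 hNN2) psi_comp h1.1 h2.1 h1.2
      · rw [Tm_comp hN]
        exact h2.2.comp h1.2)
    (fun F hF => ⟨approx_shear hN _ (shearApprox_up hNN1) F hF, mp_Tm_shear N _ F hF⟩)
    (fun F hF => ⟨approx_shear hN _ (shearApprox_low hNN2) F hF, mp_Tm_shear N _ F hF⟩)
    (fun k => k.1) (fun k => σ k.1) Subtype.val_injective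
    (fun a b hab => Subtype.ext (hσ a.2 b.2 hab))
  exact ⟨τ, hτ.1, fun k hk => hτc ⟨k, hk⟩⟩

lemma exists_small (p V b κ : ℝ) (hp : 1 ≤ p) (hκ : 0 < κ) :
    ∃ t : ℝ, 0 < t ∧ (2 * t) ^ p * V + b * t < κ := by
  have hc : Continuous (fun t : ℝ => (2 * t) ^ p * V + b * t) := by
    have : Continuous (fun t : ℝ => (2 * t) ^ p) :=
      (Real.continuous_rpow_const (by linarith)).comp (continuous_const.mul continuous_id)
    fun_prop
  have ht := hc.tendsto 0
  have h0 : (2 * (0 : ℝ)) ^ p * V + b * 0 = 0 := by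
    rw [mul_zero, Real.zero_rpow (by linarith)]; simp
  simp only [h0] at ht
  have h1 := (ht.eventually_lt_const hκ)
  have h2 : ∀ᶠ t : ℝ in nhdsWithin 0 (Set.Ioi 0), (2 * t) ^ p * V + b * t < κ :=
    h1.filter_mono nhdsWithin_le_nhds
  obtain ⟨t, ht1, ht2⟩ := (h2.and self_mem_nhdsWithin).exists
  exact ⟨t, ht2, ht1⟩

end MPNet

/-- Main theorem: For `D ≥ 2`, `2 ≤ s ≤ D`, `1 ≤ p < ∞`, compact
`U ⊆ ℝᴰ`, and control families satisfying the Lipschitz and universal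
approximation assumptions, every bounded injective Lebesgue measure-preserving
Borel map `ψ : U → ℝᴰ` can be approximated to arbitrary accuracy in the
`L^p(U)`-norm by measure-preserving neural networks from `Ψ`. -/
theorem stmt18 {D s : ℕ} (hD : 2 ≤ D) (hs2 : 2 ≤ s) (hsD : s ≤ D)
    (NN1 : Set (({i : Fin D // ¬ i.val < s - 1} → ℝ) → ({i : Fin D // i.val < s - 1} → ℝ)))
    (NN2 : Set (({i : Fin D // i.val < s - 1} → ℝ) → ({i : Fin D // ¬ i.val < s - 1} → ℝ)))
    (hNN1 : IsGoodFamily NN1) (hNN2 : IsGoodFamily NN2)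
    (p : ℝ) (hp : 1 ≤ p)
    (U : Set (Fin D → ℝ)) (hU : IsCompact U)
    (ψ : (Fin D → ℝ) → (Fin D → ℝ)) (hψm : Measurable ψ)
    (hbd : Bornology.IsBounded (ψ '' U)) (hinj : Set.InjOn ψ U)
    (himg : MeasurableSet (ψ '' U))
    (hmp : ∀ B ⊆ ψ '' U, MeasurableSet B → volume (U ∩ ψ ⁻¹' B) = volume B) :
    ∀ ε > 0, ∃ ψnet ∈ Psi D s NN1 NN2,
      ∑ i : Fin D, (∫ x in U, |ψ x i - ψnet x i| ^ p) ^ (1 / p) ≤ ε := by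
  intro ε hε
  obtain ⟨W, hUW, hψW, hgrid⟩ := MPNet.exists_grid (by omega) U hU ψ hψm hbd himg hmp
  have hD0 : (0 : ℝ) < D := by
    have : 0 < D := by omega
    exact_mod_cast this
  have hκ : 0 < (ε / D) ^ p := Real.rpow_pos_of_pos (by positivity) p
  set κ := (ε / D) ^ p with hκdef
  set V := (volume.restrict U).real Set.univ with hV
  obtain ⟨ε1, hε1, hs1⟩ := MPNet.exists_small p V ((2 * |W| + 1) ^ p) (κ / 2) hp (by positivity)
  obtain ⟨N, hN, C, σ, hσ, hτall⟩ := hgrid ε1 hε1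
  obtain ⟨τ, hτA, hτC⟩ := MPNet.good_main hs2 hsD hNN1 hNN2 hN C σ hσ
  obtain ⟨hTW, hTv⟩ := hτall τ hτC
  obtain ⟨R', hR'⟩ := hτA W
  obtain ⟨ε2, hε2, hε21, hε22, hs2'⟩ : ∃ t : ℝ, 0 < t ∧ t ≤ 1 ∧ t ≤ ε1 ∧
      (|W| + |R'|) ^ p * t ≤ κ / 2 := by
    have hc : 0 ≤ (|W| + |R'|) ^ p := Real.rpow_nonneg (by positivity) p
    refine ⟨min (min 1 ε1) (κ / 2 / ((|W| + |R'|) ^ p + 1)), by positivity,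
      (min_le_left _ _).trans (min_le_left _ _), (min_le_left _ _).trans (min_le_right _ _), ?_⟩
    calc _ ≤ (|W| + |R'|) ^ p * (κ / 2 / ((|W| + |R'|) ^ p + 1)) := by
          gcongr; exact min_le_right _ _
      _ ≤ ((|W| + |R'|) ^ p + 1) * (κ / 2 / ((|W| + |R'|) ^ p + 1)) := by
          gcongr; linarith
      _ = κ / 2 := by field_simp
  obtain ⟨m, hm, hmb, hmv⟩ := hR' ε2 hε2
  have hmc := (MPNet.psi_continuous hNN1 hNN2 m hm).measurable
  have hTm := MPNet.measurable_Tm N τ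
  refine ⟨m, hm, ?_⟩
  set T := MPNet.Tm N τ with hT
  let B1 : Set (Fin D → ℝ) := {x | x ∈ U ∧ ε1 < ‖T x - ψ x‖}
  let B2 : Set (Fin D → ℝ) := {x | ‖x‖ ≤ W ∧ ε2 < ‖T x - m x‖}
  have hB1 : MeasurableSet B1 :=
    hU.measurableSet.inter (measurableSet_lt measurable_const (hTm.sub hψm).norm)
  have hB2 : MeasurableSet B2 :=
    (measurableSet_le measurable_norm measurable_const).inter
      (measurableSet_lt measurable_const (hTm.sub hmc).norm)
  have : IsFiniteMeasure (volume.restrict U) := ⟨by simpa using hU.measure_lt_top⟩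
  have hr1 : (volume.restrict U).real B1 ≤ ε1 := by
    refine ENNReal.toReal_le_of_le_ofReal hε1.le ?_
    exact (Measure.restrict_apply_le _ _).trans hTv
  have hr2 : (volume.restrict U).real B2 ≤ ε2 := by
    refine ENNReal.toReal_le_of_le_ofReal hε2.le ?_
    exact (Measure.restrict_apply_le _ _).trans hmv
  have key : ∀ i : Fin D, (∫ x in U, |ψ x i - m x i| ^ p) ≤ κ := by
    intro i
    let a : ℝ := (2 * ε1) ^ p
    let b : ℝ := (2 * |W| + 1) ^ p
    let c : ℝ := (|W| + |R'|) ^ p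
    have ha : 0 ≤ a := Real.rpow_nonneg (by positivity) p
    have hb : 0 ≤ b := Real.rpow_nonneg (by positivity) p
    have hc : 0 ≤ c := Real.rpow_nonneg (by positivity) p
    have i1 : Integrable (B1.indicator fun _ => b) (volume.restrict U) :=
      (integrable_const b).indicator hB1
    have i2 : Integrable (B2.indicator fun _ => c) (volume.restrict U) :=
      (integrable_const c).indicator hB2
    have hle : (∫ x in U, |ψ x i - m x i| ^ p) ≤
        ∫ x in U, (a + B1.indicator (fun _ => b) x + B2.indicator (fun _ => c) x) := by
      refine integral_mono_of_nonneg (Filter.Eventually.of_forall fun x =>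
        Real.rpow_nonneg (abs_nonneg _) p) (((integrable_const a).add i1).add i2) ?_
      rw [Filter.EventuallyLE, ae_restrict_iff' hU.measurableSet]
      refine Filter.Eventually.of_forall fun x hx => ?_
      have hn : |ψ x i - m x i| ≤ ‖ψ x - m x‖ := norm_le_pi_norm (ψ x - m x) i
      have hI1 : 0 ≤ B1.indicator (fun _ => b) x := Set.indicator_nonneg (fun _ _ => hb) x
      have hI2 : 0 ≤ B2.indicator (fun _ => c) x := Set.indicator_nonneg (fun _ _ => hc) x
      have hp0 : 0 ≤ p := by linarith
      have hWa := le_abs_self W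
      have hRa := le_abs_self R'
      have hψx := hψW x hx
      have hTx := hTW x hx
      have hmx := hmb x (hUW x hx)
      by_cases hx2 : x ∈ B2
      · have h1 : ‖ψ x - m x‖ ≤ |W| + |R'| := (norm_sub_le _ _).trans (by linarith)
        have h2 : |ψ x i - m x i| ^ p ≤ c :=
          Real.rpow_le_rpow (abs_nonneg _) (hn.trans h1) hp0
        rw [Set.indicator_of_mem hx2]
        linarith
      · have h3 : ‖T x - m x‖ ≤ ε2 := by
          by_contra hcon
          exact hx2 ⟨hUW x hx, not_le.1 hcon⟩
        have htri : ‖ψ x - m x‖ ≤ ‖T x - ψ x‖ + ‖T x - m x‖ := by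
          calc ‖ψ x - m x‖ = ‖(T x - m x) - (T x - ψ x)‖ := by congr 1; abel
            _ ≤ ‖T x - m x‖ + ‖T x - ψ x‖ := norm_sub_le _ _
            _ = _ := add_comm _ _
        by_cases hx1 : x ∈ B1
        · have h1 : ‖T x - ψ x‖ ≤ 2 * |W| := (norm_sub_le _ _).trans (by linarith)
          have h2 : |ψ x i - m x i| ^ p ≤ b :=
            Real.rpow_le_rpow (abs_nonneg _) (hn.trans (by linarith)) hp0
          rw [Set.indicator_of_mem hx1]
          linarith
        · have h1 : ‖T x - ψ x‖ ≤ ε1 := by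
            by_contra hcon
            exact hx1 ⟨hx, not_le.1 hcon⟩
          have h2 : |ψ x i - m x i| ^ p ≤ a :=
            Real.rpow_le_rpow (abs_nonneg _) (hn.trans (by linarith)) hp0
          linarith
    refine hle.trans ?_
    have e1 : ∫ x in U, (a + B1.indicator (fun _ => b) x + B2.indicator (fun _ => c) x) =
        V * a + (volume.restrict U).real B1 * b + (volume.restrict U).real B2 * c := by
      have i3 : Integrable (fun x => a + B1.indicator (fun _ => b) x) (volume.restrict U) :=
        (integrable_const a).add i1
      rw [integral_add i3 i2, integral_add (integrable_const a) i1,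
        integral_const, integral_indicator_const b hB1, integral_indicator_const c hB2]
      simp only [smul_eq_mul, hV]
    rw [e1]
    have h1 : (volume.restrict U).real B1 * b ≤ ε1 * b := mul_le_mul_of_nonneg_right hr1 hb
    have h2 : (volume.restrict U).real B2 * c ≤ ε2 * c := mul_le_mul_of_nonneg_right hr2 hc
    have h3 : a * V + b * ε1 < κ / 2 := hs1
    have h4 : c * ε2 ≤ κ / 2 := hs2'
    linarith
  calc ∑ i : Fin D, (∫ x in U, |ψ x i - m x i| ^ p) ^ (1 / p)
      ≤ ∑ i : Fin D, ε / D := by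
        refine Finset.sum_le_sum fun i _ => ?_
        have h0 : 0 ≤ ∫ x in U, |ψ x i - m x i| ^ p :=
          integral_nonneg fun x => Real.rpow_nonneg (abs_nonneg _) p
        calc _ ≤ κ ^ (1 / p) := Real.rpow_le_rpow h0 (key i) (by positivity)
          _ = ε / D := by
            rw [hκdef, ← Real.rpow_mul (by positivity), mul_one_div_cancel (by linarith),
              Real.rpow_one]
    _ = ε := by
        simp only [Finset.sum_const, Finset.card_univ, Fintype.card_fin, nsmul_eq_mul]
        field_simp
    _ ≤ ε := le_rfl
end
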